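/- Let λ and μ be gl_n-highest weights (with arbitrary complex entries). Suppose the Y(gl_n)-module L(λ)⊗L(μ) is irreducible. Then for each pair of indices 1 ≤ i < j ≤ n one has: either (m_j ∉ ⟨l_j, l_i⟩ and m_i ∉ ⟨l_j, l_i⟩) or (l_j ∉ ⟨m_j, m_i⟩ and l_i ∉ ⟨m_j, m_i⟩). -/

import Mathlib

open scoped TensorProduct

/-- An `n`-tuple of complex numbers is a `gl_n`-highest weight if the consecutive
differences `λ_i - λ_{i+1}` are non-negative integers. -/
def IsGLHighestWeight (n : ℕ) (lam : Fin n → ℂ) : Prop :=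
  ∀ i : Fin n, ∀ h : (i : ℕ) + 1 < n, ∃ N : ℕ, lam i - lam ⟨(i : ℕ) + 1, h⟩ = N

/-- A realization of the irreducible finite-dimensional `gl_n`-module `L(λ)`
with highest weight `lam`, given by the action of the matrix units `E i j`. -/
structure GLRep (n : ℕ) (lam : Fin n → ℂ) where
  V : Type
  [instAddCommGroup : AddCommGroup V]
  [instModule : Module ℂ V]
  [instFiniteDimensional : FiniteDimensional ℂ V]
  E : Fin n → Fin n → (V →ₗ[ℂ] V)
  commRel : ∀ i j k l : Fin n,
    E i j ∘ₗ E k l - E k l ∘ₗ E i j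
      = (if j = k then E i l else 0) - (if l = i then E k j else 0)
  hv : V
  hv_ne : hv ≠ 0
  hv_upper : ∀ i j : Fin n, i < j → E i j hv = 0
  hv_diag : ∀ i : Fin n, E i i hv = lam i • hv
  irreducible : ∀ U : Submodule ℂ V,
    (∀ i j : Fin n, ∀ v ∈ U, E i j v ∈ U) → U = ⊥ ∨ U = ⊤

attribute [instance] GLRep.instAddCommGroup GLRep.instModule GLRep.instFiniteDimensional

/-- The action of the Yangian generator `t_{ij}^{(1)}` on `L(λ) ⊗ L(μ)`
(both evaluation modules evaluated at `0`). -/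
noncomputable def t1 {n : ℕ} {lam mu : Fin n → ℂ} (A : GLRep n lam) (B : GLRep n mu)
    (i j : Fin n) : A.V ⊗[ℂ] B.V →ₗ[ℂ] A.V ⊗[ℂ] B.V :=
  TensorProduct.map (A.E i j) LinearMap.id + TensorProduct.map LinearMap.id (B.E i j)

/-- The action of the Yangian generator `t_{ij}^{(2)}` on `L(λ) ⊗ L(μ)`. -/
noncomputable def t2 {n : ℕ} {lam mu : Fin n → ℂ} (A : GLRep n lam) (B : GLRep n mu)
    (i j : Fin n) : A.V ⊗[ℂ] B.V →ₗ[ℂ] A.V ⊗[ℂ] B.V :=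
  ∑ a : Fin n, TensorProduct.map (A.E i a) (B.E a j)

/-- Irreducibility of `L(λ) ⊗ L(μ)` as a module over the Yangian `Y(gl_n)`:
the only subspaces invariant under all the operators `t1` and `t2`
(the generators `t_{ij}^{(r)}` with `r ≥ 3` acting as zero) are `⊥` and `⊤`. -/
def YangianIrred2 {n : ℕ} {lam mu : Fin n → ℂ} (A : GLRep n lam) (B : GLRep n mu) : Prop :=
  ∀ U : Submodule ℂ (A.V ⊗[ℂ] B.V),
    (∀ i j : Fin n, ∀ v ∈ U, t1 A B i j v ∈ U) →
    (∀ i j : Fin n, ∀ v ∈ U, t2 A B i j v ∈ U) →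
    U = ⊥ ∨ U = ⊤

/-- The shifted weight `l_i = λ_i − i + 1` (with `0`-indexed entries:
`l i = lam i - i`). -/
def lshiftC (n : ℕ) (lam : Fin n → ℂ) : Fin n → ℂ :=
  fun i => lam i - ((i : ℕ) : ℂ)

/-- The set `⟨l_j, l_i⟩ = {l_j + t : t ∈ ℤ, 0 ≤ t ≤ l_i − l_j} \ {l_s : i ≤ s ≤ j}`
for a pair of indices `i < j`. -/
def bracketC (n : ℕ) (l : Fin n → ℂ) (i j : Fin n) : Set ℂ :=
  {x | (∃ t : ℕ, x = l j + (t : ℂ)) ∧ (∃ t : ℕ, l i = x + (t : ℂ)) ∧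
    ∀ s : Fin n, i ≤ s → s ≤ j → x ≠ l s}

/-- The condition `m_j, m_i ∉ ⟨l_j, l_i⟩ or l_j, l_i ∉ ⟨m_j, m_i⟩` for a pair
of indices `i < j`. -/
def SepCond (n : ℕ) (lam mu : Fin n → ℂ) (i j : Fin n) : Prop :=
  (lshiftC n mu j ∉ bracketC n (lshiftC n lam) i j ∧
      lshiftC n mu i ∉ bracketC n (lshiftC n lam) i j) ∨
  (lshiftC n lam j ∉ bracketC n (lshiftC n mu) i j ∧
      lshiftC n lam i ∉ bracketC n (lshiftC n mu) i j)

/-!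
Write `λ_c = β + L_c + c` and `μ_c = β + M_c + c` with strictly decreasing integers `L_c`, `M_c`.
If the separation condition fails for `i < j`, then, up to replacing `L(λ) ⊗ L(μ)` by its dual
`L(μ)* ⊗ L(λ)*`, one has `M_j < L_j < M_i < L_i`, no `L_s` equals `M_i` and no `M_s` equals `L_j`
for `i ≤ s ≤ j`.

Deform `L(λ)` by adding a scalar `z` to the diagonal matrix units. Successive lowering operators
lead from the highest vector `ζ = ξ ⊗ η` to some `v = ξ ⊗ y`, where `y` does not depend on `z`, and
the Yangian contains `X` with `X ζ = P(z) v` and `X' v = Q(z) ζ`, where `X'` is the image of `X`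
under the anti-involution exchanging the generators with indices `ij` and `ji`, and the order of
vanishing of `P` at `0` exceeds that of `Q` by one.

Let `φ` be the lowest functional with `φ(ζ) = 1`, so that `φ(X ζ) = φ(X' ζ)` for all `X`. If the
module at `z = 0` is irreducible, then `ζ` generates it, and Cramer's rule gives
`d(z) v = ∑ a_k(z) Y_k(z) ζ` with `Y_k` in the Yangian and `d(0) = 1`. Hence
`d Q = φ(X' d v) = ∑ a_k φ(X' Y_k ζ) = ∑ a_k φ(Y_k' X ζ) = P ∑ a_k φ(Y_k' v)`, so that `P` cannot
vanish to a higher order than `Q`.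
-/

open Finset Module

section Relations

variable {R S : Type*} [Ring R] [Ring S] {n : ℕ}

/-- The defining relations of `gl_n` for a family `X i j` of elements of a ring, where only the
entries with `i, j < n` matter. Natural-number indices with bounds are used throughout instead of
`Fin n`, so that index arithmetic needs no coercions. -/
def IsGLSystem (n : ℕ) (X : ℕ → ℕ → R) : Prop :=
  ∀ ⦃i j k l : ℕ⦄, i < n → j < n → k < n → l < n →
    X i j * X k l = X k l * X i j + ((if j = k then X i l else 0) - (if l = i then X k j else 0))

/-- The relations satisfied by the first two families of generators of the Yangian of `gl_n` when
all the higher ones vanish. -/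
structure IsYangianSystem (n : ℕ) (T₁ T₂ : ℕ → ℕ → R) : Prop where
  gl : IsGLSystem n T₁
  mixed : ∀ ⦃i j k l : ℕ⦄, i < n → j < n → k < n → l < n →
    T₁ i j * T₂ k l =
      T₂ k l * T₁ i j + ((if j = k then T₂ i l else 0) - (if l = i then T₂ k j else 0))
  quad : ∀ ⦃i j k l : ℕ⦄, i < n → j < n → k < n → l < n →
    T₂ i j * T₂ k l = T₂ k l * T₂ i j + (T₁ k j * T₂ i l - T₂ k j * T₁ i l)

variable {X Y T₁ T₂ : ℕ → ℕ → R}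

lemma IsGLSystem.isYangianSystem_zero (hX : IsGLSystem n X) :
    IsYangianSystem n X (fun _ _ => 0) where
  gl := hX
  mixed := by simp
  quad := by simp

lemma IsGLSystem.map {F : Type*} [FunLike F R S] [RingHomClass F R S] (f : F)
    (hX : IsGLSystem n X) : IsGLSystem n fun i j => f (X i j) := by
  intro i j k l hi hj hk hl
  rw [← map_mul, hX hi hj hk hl]
  simp [apply_ite f]

lemma IsYangianSystem.map {F : Type*} [FunLike F R S] [RingHomClass F R S] (f : F)
    (h : IsYangianSystem n T₁ T₂) :
    IsYangianSystem n (fun i j => f (T₁ i j)) (fun i j => f (T₂ i j)) where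
  gl := h.gl.map f
  mixed i j k l hi hj hk hl := by
    rw [← map_mul, h.mixed hi hj hk hl]
    simp [apply_ite f]
  quad i j k l hi hj hk hl := by
    rw [← map_mul, h.quad hi hj hk hl]
    simp

open MulOpposite in
lemma IsGLSystem.transpose (hX : IsGLSystem n X) : IsGLSystem n fun i j => op (X j i) := by
  intro i j k l hi hj hk hl
  simp only [← op_mul, hX hl hk hj hi, eq_comm (a := k), eq_comm (a := i)]
  simp [apply_ite op]

open MulOpposite in
lemma IsYangianSystem.transpose (h : IsYangianSystem n T₁ T₂) :
    IsYangianSystem n (fun i j => op (T₁ j i)) (fun i j => op (T₂ j i)) where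
  gl := h.gl.transpose
  mixed i j k l hi hj hk hl := by
    rw [← op_mul, ← op_mul, ← sub_eq_iff_eq_add', h.mixed hj hi hl hk]
    simp only [eq_comm (a := k), eq_comm (a := i), op_add, op_sub, apply_ite op, op_zero]
    abel
  quad i j k l hi hj hk hl := by
    have exchange : T₂ l i * T₁ j k - T₁ l i * T₂ j k = T₁ j k * T₂ l i - T₂ j k * T₁ l i := by
      rw [h.mixed hj hk hl hi, h.mixed hl hi hj hk]
      simp only [eq_comm (a := k), eq_comm (a := i)]
      abel
    simp only [← op_mul, h.quad hl hk hj hi, ← op_sub, exchange, ← op_add]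

lemma IsGLSystem.add (hX : IsGLSystem n X) (hY : IsGLSystem n Y)
    (hXY : ∀ i j k l, Commute (X i j) (Y k l)) : IsGLSystem n fun i j => X i j + Y i j := by
  intro i j k l hi hj hk hl
  simp only [add_mul, mul_add]
  rw [hX hi hj hk hl, hY hi hj hk hl, (hXY i j k l).eq, ← (hXY k l i j).eq]
  split_ifs <;> abel

section Coproduct

variable (hX : IsGLSystem n X) (hY : IsGLSystem n Y) (hXY : ∀ i j k l, Commute (X i j) (Y k l))

include hX hY hXY

lemma IsGLSystem.coproduct_mixed {i j k l : ℕ}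
    (hi : i < n) (hj : j < n) (hk : k < n) (hl : l < n) :
    (X i j + Y i j) * (∑ a ∈ range n, X k a * Y a l) =
      (∑ a ∈ range n, X k a * Y a l) * (X i j + Y i j) +
      ((if j = k then ∑ a ∈ range n, X i a * Y a l else 0)
        - (if l = i then ∑ a ∈ range n, X k a * Y a j else 0)) := by
  have summand : ∀ a ∈ range n, (X i j + Y i j) * (X k a * Y a l) =
      X k a * Y a l * (X i j + Y i j) + (((if j = k then X i a * Y a l else 0)
        - (if l = i then X k a * Y a j else 0)) +
        ((if j = a then X k a * Y i l else 0) - (if a = i then X k j * Y a l else 0))) := by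
    intro a ha
    have ha' := mem_range.1 ha
    have left : X i j * (X k a * Y a l) = X k a * Y a l * X i j +
        ((if j = k then X i a * Y a l else 0) - (if a = i then X k j * Y a l else 0)) := by
      rw [← mul_assoc, hX hi hj hk ha', add_mul, mul_assoc, (hXY i j a l).eq, ← mul_assoc]
      simp only [sub_mul, ite_mul, zero_mul]
    have right : Y i j * (X k a * Y a l) = X k a * Y a l * Y i j +
        ((if j = a then X k a * Y i l else 0) - (if l = i then X k a * Y a j else 0)) := by
      rw [← mul_assoc, ← (hXY k a i j).eq, mul_assoc, hY hi hj ha' hl, mul_add, mul_assoc]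
      simp only [mul_sub, mul_ite, mul_zero]
    rw [add_mul, left, right, mul_add]
    abel
  rw [mul_sum, sum_congr rfl summand]
  simp only [sum_add_distrib, sum_sub_distrib, ← sum_mul, sum_ite_eq, sum_ite_eq', mem_range, hi,
    hj, if_true, sub_self, add_zero]
  split_ifs <;> simp

lemma IsGLSystem.coproduct_summand_swap {i j k l a b : ℕ}
    (hi : i < n) (hj : j < n) (hk : k < n) (hl : l < n) (ha : a < n) (hb : b < n) :
    (X i a * Y a j) * (X k b * Y b l) = (X k b * Y b l) * (X i a * Y a j) +
      (((if a = k then X i b * Y a j * Y b l else 0) - (if b = i then X k a * Y a j * Y b l else 0))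
      + ((if j = b then X k b * X i a * Y a l else 0)
        - (if l = a then X k b * X i a * Y b j else 0))) := by
  have expand : X i a * X k b * (Y a j * Y b l) = X k b * X i a * (Y b l * Y a j) +
      (((if a = k then X i b else 0) - (if b = i then X k a else 0)) * (Y a j * Y b l)
      + X k b * X i a * ((if j = b then Y a l else 0) - (if l = a then Y b j else 0))) := by
    rw [hX hi ha hk hb, add_mul, hY ha hj hb hl, mul_add]
    abel
  rw [(hXY k b a j).symm.mul_mul_mul_comm, (hXY i a b l).symm.mul_mul_mul_comm, expand]
  simp only [mul_sub, mul_ite, mul_zero, sub_mul, ite_mul, zero_mul, mul_assoc]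

lemma IsGLSystem.coproduct_quad {i j k l : ℕ}
    (hi : i < n) (hj : j < n) (hk : k < n) (hl : l < n) :
    (∑ a ∈ range n, X i a * Y a j) * (∑ a ∈ range n, X k a * Y a l) =
      (∑ a ∈ range n, X k a * Y a l) * (∑ a ∈ range n, X i a * Y a j) +
      ((X k j + Y k j) * (∑ a ∈ range n, X i a * Y a l)
        - (∑ a ∈ range n, X k a * Y a j) * (X i l + Y i l)) := by
  have swap : (∑ a ∈ range n, X i a * Y a j) * (∑ a ∈ range n, X k a * Y a l) =
      ∑ a ∈ range n, ∑ b ∈ range n, ((X k b * Y b l) * (X i a * Y a j) +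
      (((if a = k then X i b * Y a j * Y b l else 0) - (if b = i then X k a * Y a j * Y b l else 0))
      + ((if j = b then X k b * X i a * Y a l else 0)
        - (if l = a then X k b * X i a * Y b j else 0)))) := by
    rw [sum_mul_sum]
    exact sum_congr rfl fun a ha => sum_congr rfl fun b hb =>
      hX.coproduct_summand_swap hY hXY hi hj hk hl (mem_range.1 ha) (mem_range.1 hb)
  have pull_ite (p : Prop) [Decidable p] (f : ℕ → R) :
      ∑ b ∈ range n, (if p then f b else 0) = if p then ∑ b ∈ range n, f b else 0 := by
    split_ifs <;> simp
  have e₁ (a : ℕ) : Y k j * (X i a * Y a l) = X i a * Y k j * Y a l := by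
    rw [← mul_assoc, (hXY i a k j).eq]
  have e₂ (a : ℕ) : X k a * Y a j * X i l = X k a * X i l * Y a j := by
    rw [mul_assoc, ← (hXY i l a j).eq, mul_assoc]
  rw [swap]
  simp only [sum_add_distrib, sum_sub_distrib, pull_ite, sum_ite_eq, sum_ite_eq', mem_range, hi,
    hj, hk, hl, if_true]
  rw [sum_comm, ← sum_mul_sum, add_mul, mul_add]
  simp only [mul_sum, sum_mul, e₁, e₂, mul_assoc]
  abel

lemma IsGLSystem.coproduct :
    IsYangianSystem n (fun i j => X i j + Y i j) (fun i j => ∑ a ∈ range n, X i a * Y a j) where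
  gl := hX.add hY hXY
  mixed _ _ _ _ := hX.coproduct_mixed hY hXY
  quad _ _ _ _ := hX.coproduct_quad hY hXY

end Coproduct

end Relations

section Lowering

variable {𝕜 M : Type*} [CommRing 𝕜] [AddCommGroup M] [Module 𝕜 M] {n : ℕ}

/-- `v` is a highest vector for a Yangian system of operators, of weights `h₁` and `h₂` for the
two families. -/
structure IsYangianHighest (n : ℕ) (T₁ T₂ : ℕ → ℕ → End 𝕜 M) (h₁ h₂ : ℕ → 𝕜) (v : M) : Prop
    extends IsYangianSystem n T₁ T₂ where
  upper₁ : ∀ ⦃i j : ℕ⦄, i < j → j < n → T₁ i j v = 0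
  upper₂ : ∀ ⦃i j : ℕ⦄, i < j → j < n → T₂ i j v = 0
  diag₁ : ∀ ⦃i : ℕ⦄, i < n → T₁ i i v = h₁ i • v
  diag₂ : ∀ ⦃i : ℕ⦄, i < n → T₂ i i v = h₂ i • v

/-- `Lowered n T₁ T₂ v d m` says that `m` is a linear combination of vectors obtained from `v` by
applying lowering operators (those `i j` with `j < i`), at most `d` of them from `T₂`. -/
inductive Lowered (n : ℕ) (T₁ T₂ : ℕ → ℕ → End 𝕜 M) (v : M) : ℕ → M → Prop
  | base (d : ℕ) : Lowered n T₁ T₂ v d v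
  | add {d : ℕ} {m m' : M} : Lowered n T₁ T₂ v d m → Lowered n T₁ T₂ v d m' →
      Lowered n T₁ T₂ v d (m + m')
  | smul {d : ℕ} {m : M} (c : 𝕜) : Lowered n T₁ T₂ v d m → Lowered n T₁ T₂ v d (c • m)
  | lower₁ {d : ℕ} {m : M} {i j : ℕ} : j < i → i < n → Lowered n T₁ T₂ v d m →
      Lowered n T₁ T₂ v d (T₁ i j m)
  | lower₂ {d : ℕ} {m : M} {i j : ℕ} : j < i → i < n → Lowered n T₁ T₂ v d m →
      Lowered n T₁ T₂ v (d + 1) (T₂ i j m)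

namespace Lowered

variable {T₁ T₂ : ℕ → ℕ → End 𝕜 M} {v m m' : M} {d e : ℕ}

lemma zero (d : ℕ) : Lowered n T₁ T₂ v d 0 := by
  simpa using smul (0 : 𝕜) (base (v := v) d)

lemma sub (h : Lowered n T₁ T₂ v d m) (h' : Lowered n T₁ T₂ v d m') :
    Lowered n T₁ T₂ v d (m - m') := by
  simpa [sub_eq_add_neg] using h.add (h'.smul (-1))

lemma succ (h : Lowered n T₁ T₂ v d m) : Lowered n T₁ T₂ v (d + 1) m := by
  induction h with
  | base d => exact base _
  | add _ _ ih ih' => exact ih.add ih'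
  | smul c _ ih => exact ih.smul c
  | lower₁ hij hi _ ih => exact ih.lower₁ hij hi
  | lower₂ hij hi _ ih => exact ih.lower₂ hij hi

lemma mono (hde : d ≤ e) (h : Lowered n T₁ T₂ v d m) : Lowered n T₁ T₂ v e m := by
  induction e, hde using Nat.le_induction with
  | base => exact h
  | succ e _ ih => exact ih.succ

lemma ite_apply {p : Prop} [Decidable p] {f : End 𝕜 M} (h : p → Lowered n T₁ T₂ v d (f m)) :
    Lowered n T₁ T₂ v d ((if p then f else 0) m) := by
  split_ifs with hp
  exacts [h hp, zero d]

/-- The degree-`d` part of the stability of the lowering filtration under all operators. -/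
def StableAt (n : ℕ) (T₁ T₂ : ℕ → ℕ → End 𝕜 M) (v : M) (d : ℕ) : Prop :=
  ∀ ⦃m⦄, Lowered n T₁ T₂ v d m → ∀ ⦃a b⦄, a < n → b < n →
    Lowered n T₁ T₂ v d (T₁ a b m) ∧ Lowered n T₁ T₂ v (d + 1) (T₂ a b m)

variable {h₁ h₂ : ℕ → 𝕜} (hv : IsYangianHighest n T₁ T₂ h₁ h₂ v) {a b : ℕ}

include hv

lemma apply₁_self (ha : a < n) (hb : b < n) : Lowered n T₁ T₂ v d (T₁ a b v) := by
  rcases lt_trichotomy a b with h | rfl | h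
  · exact hv.upper₁ h hb ▸ zero d
  · exact hv.diag₁ ha ▸ (base d).smul _
  · exact (base d).lower₁ h ha

lemma apply₂_self (ha : a < n) (hb : b < n) : Lowered n T₁ T₂ v (d + 1) (T₂ a b v) := by
  rcases lt_trichotomy a b with h | rfl | h
  · exact hv.upper₂ h hb ▸ zero _
  · exact hv.diag₂ ha ▸ (base _).smul _
  · exact (base d).lower₂ h ha

lemma apply₁_of_stableAt (hd : ∀ e < d, StableAt n T₁ T₂ v e) (h : Lowered n T₁ T₂ v d m)
    (ha : a < n) (hb : b < n) : Lowered n T₁ T₂ v d (T₁ a b m) := by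
  induction h generalizing a b with
  | base d => exact apply₁_self hv ha hb
  | add _ _ ih ih' => simpa only [map_add] using (ih hd ha hb).add (ih' hd ha hb)
  | smul c _ ih => simpa only [map_smul] using (ih hd ha hb).smul c
  | @lower₁ d m i j hij hi _ ih =>
    have hj := hij.trans hi
    rw [← Module.End.mul_apply, hv.gl ha hb hi hj]
    exact ((ih hd ha hb).lower₁ hij hi).add
      ((ite_apply fun _ => ih hd ha hj).sub (ite_apply fun _ => ih hd hi hb))
  | @lower₂ d m i j hij hi h =>
    have hj := hij.trans hi
    have stable := hd d d.lt_succ_self h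
    rw [← Module.End.mul_apply, hv.mixed ha hb hi hj]
    exact ((stable ha hb).1.lower₂ hij hi).add
      ((ite_apply fun _ => (stable ha hj).2).sub (ite_apply fun _ => (stable hi hb).2))

lemma apply₂_of_stableAt (hd : ∀ e < d, StableAt n T₁ T₂ v e) (h : Lowered n T₁ T₂ v d m)
    (ha : a < n) (hb : b < n) : Lowered n T₁ T₂ v (d + 1) (T₂ a b m) := by
  induction h generalizing a b with
  | base d => exact apply₂_self hv ha hb
  | add _ _ ih ih' => simpa only [map_add] using (ih hd ha hb).add (ih' hd ha hb)
  | smul c _ ih => simpa only [map_smul] using (ih hd ha hb).smul c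
  | @lower₁ d m i j hij hi _ ih =>
    have hj := hij.trans hi
    rw [← Module.End.mul_apply, eq_sub_of_add_eq (hv.mixed hi hj ha hb).symm]
    exact ((ih hd ha hb).lower₁ hij hi).sub
      ((ite_apply fun _ => ih hd hi hb).sub (ite_apply fun _ => ih hd ha hj))
  | @lower₂ d m i j hij hi h =>
    have hj := hij.trans hi
    have stable := hd d d.lt_succ_self h
    rw [← Module.End.mul_apply, hv.quad ha hb hi hj]
    exact ((stable ha hb).2.lower₂ hij hi).add
      ((apply₁_of_stableAt hv hd (stable ha hj).2 hi hb).succ.sub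
        (hd d d.lt_succ_self (stable ha hj).1 hi hb).2.succ)

lemma stableAt (d : ℕ) : StableAt n T₁ T₂ v d := by
  induction d using Nat.strong_induction_on with
  | _ d hd =>
    exact fun m h a b ha hb => ⟨apply₁_of_stableAt hv hd h ha hb, apply₂_of_stableAt hv hd h ha hb⟩

end Lowered

/-- The submodule generated from `v` by the lowering operators. -/
def loweredSubmodule (n : ℕ) (T₁ T₂ : ℕ → ℕ → End 𝕜 M) (v : M) : Submodule 𝕜 M where
  carrier := {m | ∃ d, Lowered n T₁ T₂ v d m}
  zero_mem' := ⟨0, .zero 0⟩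
  add_mem' := by
    rintro m m' ⟨d, h⟩ ⟨d', h'⟩
    exact ⟨max d d', (h.mono (le_max_left d d')).add (h'.mono (le_max_right d d'))⟩
  smul_mem' := by
    rintro c m ⟨d, h⟩
    exact ⟨d, h.smul c⟩

section loweredSubmodule

variable {T₁ T₂ : ℕ → ℕ → End 𝕜 M} {v m : M} {h₁ h₂ : ℕ → 𝕜}

lemma self_mem_loweredSubmodule : v ∈ loweredSubmodule n T₁ T₂ v := ⟨0, .base 0⟩

lemma apply₁_mem_loweredSubmodule (hv : IsYangianHighest n T₁ T₂ h₁ h₂ v)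
    (hm : m ∈ loweredSubmodule n T₁ T₂ v) {a b : ℕ} (ha : a < n) (hb : b < n) :
    T₁ a b m ∈ loweredSubmodule n T₁ T₂ v :=
  hm.imp fun d h => (Lowered.stableAt hv d h ha hb).1

lemma apply₂_mem_loweredSubmodule (hv : IsYangianHighest n T₁ T₂ h₁ h₂ v)
    (hm : m ∈ loweredSubmodule n T₁ T₂ v) {a b : ℕ} (ha : a < n) (hb : b < n) :
    T₂ a b m ∈ loweredSubmodule n T₁ T₂ v :=
  let ⟨d, h⟩ := hm
  ⟨d + 1, (Lowered.stableAt hv d h ha hb).2⟩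

lemma loweredSubmodule_le_ker (f : M →ₗ[𝕜] 𝕜) (hf : f v = 0)
    (hf₁ : ∀ i j, j < i → i < n → ∀ m, f (T₁ i j m) = 0)
    (hf₂ : ∀ i j, j < i → i < n → ∀ m, f (T₂ i j m) = 0) :
    loweredSubmodule n T₁ T₂ v ≤ LinearMap.ker f := by
  rintro m ⟨d, h⟩
  rw [LinearMap.mem_ker]
  induction h with
  | base => exact hf
  | add _ _ ih ih' => rw [map_add, ih, ih', add_zero]
  | smul c _ ih => rw [map_smul, ih, smul_zero]
  | lower₁ hij hi _ _ => exact hf₁ _ _ hij hi _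
  | lower₂ hij hi _ _ => exact hf₂ _ _ hij hi _

end loweredSubmodule

end Lowering

section Contravariance

open MulOpposite

section System

variable {R S : Type*} [Ring R] [Ring S] {n : ℕ}

lemma IsGLSystem.prodMk {X : ℕ → ℕ → R} {Y : ℕ → ℕ → S} (hX : IsGLSystem n X)
    (hY : IsGLSystem n Y) : IsGLSystem n fun i j => (X i j, Y i j) := by
  intro i j k l hi hj hk hl
  refine Prod.ext ((hX hi hj hk hl).trans ?_) ((hY hi hj hk hl).trans ?_) <;>
    simp [apply_ite Prod.fst, apply_ite Prod.snd]

lemma IsYangianSystem.prodMk {T₁ T₂ : ℕ → ℕ → R} {S₁ S₂ : ℕ → ℕ → S}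
    (hT : IsYangianSystem n T₁ T₂) (hS : IsYangianSystem n S₁ S₂) :
    IsYangianSystem n (fun i j => (T₁ i j, S₁ i j)) (fun i j => (T₂ i j, S₂ i j)) where
  gl := hT.gl.prodMk hS.gl
  mixed i j k l hi hj hk hl := by
    refine Prod.ext ((hT.mixed hi hj hk hl).trans ?_) ((hS.mixed hi hj hk hl).trans ?_) <;>
      simp [apply_ite Prod.fst, apply_ite Prod.snd]
  quad i j k l hi hj hk hl := Prod.ext (hT.quad hi hj hk hl) (hS.quad hi hj hk hl)

end System

variable {𝕜 W : Type*} [CommRing 𝕜] [AddCommGroup W] [Module 𝕜 W] {n : ℕ}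

/-- Taking transposes of endomorphisms, as a homomorphism from the opposite algebra. -/
def dualMapAlgHom (𝕜 W : Type*) [CommRing 𝕜] [AddCommGroup W] [Module 𝕜 W] :
    (End 𝕜 W)ᵐᵒᵖ →ₐ[𝕜] End 𝕜 (Dual 𝕜 W) :=
  AlgHom.ofLinearMap (Dual.transpose ∘ₗ (opLinearEquiv 𝕜).symm.toLinearMap) rfl fun _ _ => rfl

/-- A pair `(X, X')` acts on `W × Dual 𝕜 W` by `X` and the transpose of `X'`. -/
def prodDualAlgHom (𝕜 W : Type*) [CommRing 𝕜] [AddCommGroup W] [Module 𝕜 W] :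
    End 𝕜 W × (End 𝕜 W)ᵐᵒᵖ →ₐ[𝕜] End 𝕜 (W × Dual 𝕜 W) :=
  (LinearMap.prodMapAlgHom 𝕜 W (Dual 𝕜 W)).comp
    ((AlgHom.id 𝕜 _).prodMap (dualMapAlgHom 𝕜 W))

/-- `X'` is the image of `X` under the anti-involution exchanging the generators `i j` and `j i`:
the pair `(X, X')` lies in the subalgebra of `End W × (End W)ᵐᵒᵖ` generated by the pairs
`(T i j, T j i)`. -/
def IsTransposePair (n : ℕ) (T₁ T₂ : ℕ → ℕ → End 𝕜 W) (X X' : End 𝕜 W) : Prop :=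
  (X, op X') ∈ Algebra.adjoin 𝕜 {p : End 𝕜 W × (End 𝕜 W)ᵐᵒᵖ | ∃ i < n, ∃ j < n,
    p = (T₁ i j, op (T₁ j i)) ∨ p = (T₂ i j, op (T₂ j i))}

namespace IsTransposePair

variable {T₁ T₂ : ℕ → ℕ → End 𝕜 W} {X X' Y Y' : End 𝕜 W} {i j : ℕ}

lemma gen₁ (hi : i < n) (hj : j < n) : IsTransposePair n T₁ T₂ (T₁ i j) (T₁ j i) :=
  Algebra.subset_adjoin ⟨i, hi, j, hj, .inl rfl⟩

lemma gen₂ (hi : i < n) (hj : j < n) : IsTransposePair n T₁ T₂ (T₂ i j) (T₂ j i) :=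
  Algebra.subset_adjoin ⟨i, hi, j, hj, .inr rfl⟩

lemma zero : IsTransposePair n T₁ T₂ 0 0 := zero_mem (Algebra.adjoin 𝕜 _)

lemma one : IsTransposePair n T₁ T₂ 1 1 := one_mem (Algebra.adjoin 𝕜 _)

lemma add (hX : IsTransposePair n T₁ T₂ X X') (hY : IsTransposePair n T₁ T₂ Y Y') :
    IsTransposePair n T₁ T₂ (X + Y) (X' + Y') := add_mem hX hY

lemma smul (c : 𝕜) (hX : IsTransposePair n T₁ T₂ X X') :
    IsTransposePair n T₁ T₂ (c • X) (c • X') := Subalgebra.smul_mem _ hX c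

lemma mul (hX : IsTransposePair n T₁ T₂ X X') (hY : IsTransposePair n T₁ T₂ Y Y') :
    IsTransposePair n T₁ T₂ (X * Y) (Y' * X') := mul_mem hX hY

lemma sum {ι : Type*} {s : Finset ι} {X X' : ι → End 𝕜 W}
    (h : ∀ i ∈ s, IsTransposePair n T₁ T₂ (X i) (X' i)) :
    IsTransposePair n T₁ T₂ (∑ i ∈ s, X i) (∑ i ∈ s, X' i) := by
  simpa only [IsTransposePair, op_sum, prod_mk_sum] using sum_mem h

end IsTransposePair

variable {T₁ T₂ : ℕ → ℕ → End 𝕜 W} {h₁ h₂ : ℕ → 𝕜} {ζ : W} {φ : Dual 𝕜 W}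

/-- A functional is a lowest functional if it is a highest vector for the transposed operators. -/
def IsYangianLowest (n : ℕ) (T₁ T₂ : ℕ → ℕ → End 𝕜 W) (h₁ h₂ : ℕ → 𝕜) (φ : Dual 𝕜 W) : Prop :=
  IsYangianHighest n (fun i j => (T₁ j i).dualMap) (fun i j => (T₂ j i).dualMap) h₁ h₂ φ

lemma IsYangianHighest.prodMk_dual (hζ : IsYangianHighest n T₁ T₂ h₁ h₂ ζ)
    (hφ : IsYangianLowest n T₁ T₂ h₁ h₂ φ) :
    IsYangianHighest n (fun i j => prodDualAlgHom 𝕜 W (T₁ i j, op (T₁ j i)))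
      (fun i j => prodDualAlgHom 𝕜 W (T₂ i j, op (T₂ j i))) h₁ h₂ (ζ, φ) where
  toIsYangianSystem := (hζ.toIsYangianSystem.prodMk hζ.transpose).map (prodDualAlgHom 𝕜 W)
  upper₁ _ _ hij hj := Prod.ext (hζ.upper₁ hij hj) (hφ.upper₁ hij hj)
  upper₂ _ _ hij hj := Prod.ext (hζ.upper₂ hij hj) (hφ.upper₂ hij hj)
  diag₁ _ hi := Prod.ext (hζ.diag₁ hi) (hφ.diag₁ hi)
  diag₂ _ hi := Prod.ext (hζ.diag₂ hi) (hφ.diag₂ hi)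

/-- The pair `(ζ, φ)` generates, inside `W × Dual 𝕜 W`, the graph of a contravariant form, on
which the functional `(v, ψ) ↦ φ v - ψ ζ` vanishes because it does so on lowered vectors. -/
lemma IsTransposePair.apply_eq {X X' : End 𝕜 W} (hX : IsTransposePair n T₁ T₂ X X')
    (hζ : IsYangianHighest n T₁ T₂ h₁ h₂ ζ) (hφ : IsYangianLowest n T₁ T₂ h₁ h₂ φ) :
    φ (X ζ) = φ (X' ζ) := by
  set N := loweredSubmodule n (fun i j => prodDualAlgHom 𝕜 W (T₁ i j, op (T₁ j i)))
    (fun i j => prodDualAlgHom 𝕜 W (T₂ i j, op (T₂ j i))) (ζ, φ)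
  have hpair := hζ.prodMk_dual hφ
  have mem_of_mem : ∀ m ∈ N, prodDualAlgHom 𝕜 W (X, op X') m ∈ N := by
    refine Algebra.adjoin_induction
      (p := fun p _ => ∀ m ∈ N, prodDualAlgHom 𝕜 W p m ∈ N) ?_ ?_ ?_ ?_ hX
    · rintro _ ⟨i, hi, j, hj, rfl | rfl⟩ m hm
      exacts [apply₁_mem_loweredSubmodule hpair hm hi hj,
        apply₂_mem_loweredSubmodule hpair hm hi hj]
    · intro c m hm
      rw [AlgHom.commutes]
      exact N.smul_mem c hm
    · intro p q _ _ hp hq m hm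
      rw [map_add]
      exact N.add_mem (hp m hm) (hq m hm)
    · intro p q _ _ hp hq m hm
      rw [map_mul]
      exact hp _ (hq m hm)
  have vanish : N ≤ LinearMap.ker (φ ∘ₗ LinearMap.fst 𝕜 W (Dual 𝕜 W) -
      LinearMap.applyₗ ζ ∘ₗ LinearMap.snd 𝕜 W (Dual 𝕜 W)) := by
    refine loweredSubmodule_le_ker _ (sub_self _) ?_ ?_
    · rintro i j hij hi ⟨v, ψ⟩
      exact (congrArg₂ (· - ·) (LinearMap.congr_fun (hφ.upper₁ hij hi) v)
        ((congrArg ψ (hζ.upper₁ hij hi)).trans (map_zero ψ))).trans (sub_zero 0)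
    · rintro i j hij hi ⟨v, ψ⟩
      exact (congrArg₂ (· - ·) (LinearMap.congr_fun (hφ.upper₂ hij hi) v)
        ((congrArg ψ (hζ.upper₂ hij hi)).trans (map_zero ψ))).trans (sub_zero 0)
  exact sub_eq_zero.1 (vanish (mem_of_mem _ self_mem_loweredSubmodule))

end Contravariance

section HighestVector

variable {𝕜 U V : Type*} [CommRing 𝕜] [AddCommGroup U] [Module 𝕜 U] [AddCommGroup V] [Module 𝕜 V]
  {n : ℕ} {E : ℕ → ℕ → End 𝕜 U} {F : ℕ → ℕ → End 𝕜 V} {ξ : U} {η : V} {lam mu : ℕ → 𝕜}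

/-- `ξ` is a highest vector of weight `lam` for operators `E i j` representing `gl_n`. -/
structure IsHighestVector (n : ℕ) (E : ℕ → ℕ → End 𝕜 U) (lam : ℕ → 𝕜) (ξ : U) : Prop where
  rel : IsGLSystem n E
  upper : ∀ ⦃i j : ℕ⦄, i < j → j < n → E i j ξ = 0
  diag : ∀ ⦃i : ℕ⦄, i < n → E i i ξ = lam i • ξ

lemma IsHighestVector.isYangianHighest (h : IsHighestVector n E lam ξ) :
    IsYangianHighest n E (fun _ _ => 0) lam 0 ξ where
  toIsYangianSystem := h.rel.isYangianSystem_zero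
  upper₁ := h.upper
  upper₂ := by simp
  diag₁ := h.diag
  diag₂ := by simp

/-- A representation of `gl_n` twisted by the automorphism `E i j ↦ E i j + δ i j • z`. -/
def centralShift (z : 𝕜) (E : ℕ → ℕ → End 𝕜 U) (i j : ℕ) : End 𝕜 U :=
  E i j + if i = j then z • 1 else 0

lemma isGLSystem_ite_smul_one (n : ℕ) (z : 𝕜) :
    IsGLSystem n fun i j => if i = j then z • (1 : End 𝕜 U) else 0 := by
  intro i j k l _ _ _ _
  grind

lemma IsGLSystem.centralShift (hE : IsGLSystem n E) (z : 𝕜) :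
    IsGLSystem n (centralShift z E) :=
  hE.add (isGLSystem_ite_smul_one n z) fun i j k l => by
    split_ifs
    exacts [(Commute.one_right _).smul_right z, Commute.zero_right _]

lemma IsHighestVector.centralShift (h : IsHighestVector n E lam ξ) (z : 𝕜) :
    IsHighestVector n (centralShift z E) (fun c => lam c + z) ξ where
  rel := h.rel.centralShift z
  upper i j hij hj := by simp [_root_.centralShift, h.upper hij hj, hij.ne]
  diag i hi := by simp [_root_.centralShift, h.diag hi, add_smul]

/-- The action of the Yangian generator `t_{ij}^{(1)}` on a tensor product. -/
def tensorT₁ (E : ℕ → ℕ → End 𝕜 U) (F : ℕ → ℕ → End 𝕜 V) (i j : ℕ) : End 𝕜 (U ⊗[𝕜] V) :=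
  (E i j).rTensor V + (F i j).lTensor U

/-- The action of the Yangian generator `t_{ij}^{(2)}` on a tensor product. -/
def tensorT₂ (n : ℕ) (E : ℕ → ℕ → End 𝕜 U) (F : ℕ → ℕ → End 𝕜 V) (i j : ℕ) :
    End 𝕜 (U ⊗[𝕜] V) :=
  ∑ a ∈ range n, TensorProduct.map (E i a) (F a j)

@[simp]
lemma tensorT₁_tmul (i j : ℕ) (u : U) (v : V) :
    tensorT₁ E F i j (u ⊗ₜ v) = E i j u ⊗ₜ v + u ⊗ₜ F i j v := rfl

@[simp]
lemma tensorT₂_tmul (i j : ℕ) (u : U) (v : V) :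
    tensorT₂ n E F i j (u ⊗ₜ v) = ∑ a ∈ range n, E i a u ⊗ₜ F a j v := by
  simp [tensorT₂]

lemma IsGLSystem.tensor (hE : IsGLSystem n E) (hF : IsGLSystem n F) :
    IsYangianSystem n (tensorT₁ E F) (tensorT₂ n E F) := by
  have factor : tensorT₂ n E F =
      fun i j => ∑ a ∈ range n, (E i a).rTensor V * (F a j).lTensor U := by
    funext i j
    exact sum_congr rfl fun a _ => (LinearMap.rTensor_comp_lTensor _ _ _).symm
  rw [factor]
  exact (hE.map (Module.End.rTensorAlgHom 𝕜 U V)).coproduct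
    (hF.map (Module.End.lTensorAlgHom 𝕜 V U)) fun i j k l =>
      (LinearMap.rTensor_comp_lTensor _ _ _).trans (LinearMap.lTensor_comp_rTensor _ _ _).symm

lemma IsHighestVector.tensorT₂_tmul (hξ : IsHighestVector n E lam ξ) {i : ℕ} (hi : i < n) (j : ℕ)
    (v : V) : tensorT₂ n E F i j (ξ ⊗ₜ[𝕜] v) =
      ∑ a ∈ range i, E i a ξ ⊗ₜ[𝕜] F a j v + lam i • (ξ ⊗ₜ[𝕜] F i j v) := by
  have vanish : ∑ a ∈ Ico (i + 1) n, E i a ξ ⊗ₜ[𝕜] F a j v = 0 :=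
    sum_eq_zero fun a ha => by
      rw [hξ.upper (mem_Ico.1 ha).1 (mem_Ico.1 ha).2, TensorProduct.zero_tmul]
  rw [_root_.tensorT₂_tmul, ← sum_range_add_sum_Ico _ (Nat.succ_le_of_lt hi), sum_range_succ,
    vanish, add_zero, hξ.diag hi, TensorProduct.smul_tmul']

lemma IsHighestVector.tmul (hξ : IsHighestVector n E lam ξ) (hη : IsHighestVector n F mu η) :
    IsYangianHighest n (tensorT₁ E F) (tensorT₂ n E F) (fun c => lam c + mu c)
      (fun c => lam c * mu c) (ξ ⊗ₜ η) where
  toIsYangianSystem := hξ.rel.tensor hη.rel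
  upper₁ i j hij hj := by simp [hξ.upper hij hj, hη.upper hij hj]
  upper₂ i j hij hj := by
    rw [hξ.tensorT₂_tmul (hij.trans hj), hη.upper hij hj, sum_eq_zero]
    · simp
    · intro a ha
      rw [hη.upper ((mem_range.1 ha).trans hij) hj, TensorProduct.tmul_zero]
  diag₁ i hi := by
    simp [hξ.diag hi, hη.diag hi, add_smul, TensorProduct.smul_tmul']
  diag₂ i hi := by
    rw [hξ.tensorT₂_tmul hi, hη.diag hi, sum_eq_zero]
    · simp [mul_smul]
    · intro a ha
      rw [hη.upper (mem_range.1 ha) hi, TensorProduct.tmul_zero]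

lemma IsYangianHighest.of_intertwining {T₁ T₂ : ℕ → ℕ → End 𝕜 U} {S₁ S₂ : ℕ → ℕ → End 𝕜 V}
    {h₁ h₂ : ℕ → 𝕜} (hξ : IsYangianHighest n T₁ T₂ h₁ h₂ ξ) (hS : IsYangianSystem n S₁ S₂)
    (f : U →ₗ[𝕜] V) (hf₁ : ∀ i j u, f (T₁ i j u) = S₁ i j (f u))
    (hf₂ : ∀ i j u, f (T₂ i j u) = S₂ i j (f u)) : IsYangianHighest n S₁ S₂ h₁ h₂ (f ξ) where
  toIsYangianSystem := hS
  upper₁ i j hij hj := by rw [← hf₁, hξ.upper₁ hij hj, map_zero]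
  upper₂ i j hij hj := by rw [← hf₂, hξ.upper₂ hij hj, map_zero]
  diag₁ i hi := by rw [← hf₁, hξ.diag₁ hi, map_smul]
  diag₂ i hi := by rw [← hf₂, hξ.diag₂ hi, map_smul]

/-- The contragredient operators: the matrix unit `i j` acts by the transpose of `E j i`. -/
def contragredient (E : ℕ → ℕ → End 𝕜 U) (i j : ℕ) : End 𝕜 (Dual 𝕜 U) := (E j i).dualMap

/-- The canonical map `V* ⊗ U* → (U ⊗ V)*`; it intertwines the contragredient Yangian operators
because transposition reverses the coproduct. -/
def dualDistribSwap (𝕜 U V : Type*) [CommRing 𝕜] [AddCommGroup U] [Module 𝕜 U] [AddCommGroup V]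
    [Module 𝕜 V] : Dual 𝕜 V ⊗[𝕜] Dual 𝕜 U →ₗ[𝕜] Dual 𝕜 (U ⊗[𝕜] V) :=
  TensorProduct.dualDistrib 𝕜 U V ∘ₗ (TensorProduct.comm 𝕜 (Dual 𝕜 V) (Dual 𝕜 U)).toLinearMap

@[simp]
lemma dualDistribSwap_tmul (ψ : Dual 𝕜 V) (φ : Dual 𝕜 U) (u : U) (v : V) :
    dualDistribSwap 𝕜 U V (ψ ⊗ₜ φ) (u ⊗ₜ v) = φ u * ψ v := by
  simp [dualDistribSwap]

lemma dualDistribSwap_tensorT₁ (i j : ℕ) (x : Dual 𝕜 V ⊗[𝕜] Dual 𝕜 U) :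
    dualDistribSwap 𝕜 U V (tensorT₁ (contragredient F) (contragredient E) i j x) =
      (tensorT₁ E F j i).dualMap (dualDistribSwap 𝕜 U V x) := by
  induction x using TensorProduct.induction_on with
  | zero => simp
  | add x y hx hy => simp only [map_add, hx, hy]
  | tmul ψ φ =>
    refine TensorProduct.ext' fun u v => ?_
    simp [contragredient, add_comm]

lemma dualDistribSwap_tensorT₂ (i j : ℕ) (x : Dual 𝕜 V ⊗[𝕜] Dual 𝕜 U) :
    dualDistribSwap 𝕜 U V (tensorT₂ n (contragredient F) (contragredient E) i j x) =
      (tensorT₂ n E F j i).dualMap (dualDistribSwap 𝕜 U V x) := by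
  induction x using TensorProduct.induction_on with
  | zero => simp
  | add x y hx hy => simp only [map_add, hx, hy]
  | tmul ψ φ =>
    refine TensorProduct.ext' fun u v => ?_
    simp [contragredient]

lemma IsHighestVector.isYangianLowest_dualDistribSwap {φ : Dual 𝕜 U} {ψ : Dual 𝕜 V}
    (hE : IsGLSystem n E) (hF : IsGLSystem n F)
    (hφ : IsHighestVector n (contragredient E) lam φ)
    (hψ : IsHighestVector n (contragredient F) mu ψ) :
    IsYangianLowest n (tensorT₁ E F) (tensorT₂ n E F) (fun c => mu c + lam c)
      (fun c => mu c * lam c) (dualDistribSwap 𝕜 U V (ψ ⊗ₜ φ)) :=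
  (hψ.tmul hφ).of_intertwining ((hE.tensor hF).transpose.map (dualMapAlgHom 𝕜 (U ⊗[𝕜] V))) _
    dualDistribSwap_tensorT₁ dualDistribSwap_tensorT₂

end HighestVector

section LowestFunctional

lemma exists_hasEigenvalue_forall_re_le {V : Type*} [AddCommGroup V] [Module ℂ V]
    [FiniteDimensional ℂ V] [Nontrivial V] (f : End ℂ V) :
    ∃ μ, f.HasEigenvalue μ ∧ ∀ ν, f.HasEigenvalue ν → μ.re ≤ ν.re :=
  Set.exists_min_image {μ | f.HasEigenvalue μ} Complex.re f.finite_hasEigenvalue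
    f.exists_eigenvalue

/-- The element `∑ c, c • X c c` of `gl_n`, which grades the matrix units by `i - j`. -/
def gradingElement {R : Type*} [Ring R] (n : ℕ) (X : ℕ → ℕ → R) : R := ∑ c ∈ range n, c • X c c

lemma IsGLSystem.gradingElement_mul {R : Type*} [Ring R] {n : ℕ} {X : ℕ → ℕ → R}
    (hX : IsGLSystem n X) {i j : ℕ} (hi : i < n) (hj : j < n) :
    gradingElement n X * X i j = X i j * gradingElement n X + ((i : ℤ) - j) • X i j := by
  have summand : ∀ c ∈ range n, c • X c c * X i j = X i j * (c • X c c) +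
      ((if c = i then c • X c j else 0) - (if j = c then c • X i c else 0)) := by
    intro c hc
    have hc' := mem_range.1 hc
    rw [smul_mul_assoc, hX hc' hc' hi hj, mul_smul_comm, smul_add, smul_sub, smul_ite, smul_ite,
      smul_zero]
  rw [gradingElement, sum_mul, sum_congr rfl summand, sum_add_distrib, ← mul_sum,
    sum_sub_distrib, sum_ite_eq', sum_ite_eq]
  simp [hi, hj, sub_smul]

variable {V : Type*} [AddCommGroup V] [Module ℂ V] {n : ℕ}
  {E : ℕ → ℕ → End ℂ V} {lam : ℕ → ℂ} {ξ : V}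

/-- An eigenvector of the transposed grading element for an eigenvalue of minimal real part is
killed by the lowering operators, which decrease the eigenvalue. -/
lemma IsGLSystem.exists_dual_ne_zero_lower_eq_zero [FiniteDimensional ℂ V] [Nontrivial V]
    (hE : IsGLSystem n E) :
    ∃ g : Dual ℂ V, g ≠ 0 ∧ ∀ ⦃i j⦄, j < i → i < n → g ∘ₗ E i j = 0 := by
  obtain ⟨μ, hμ, hmin⟩ := exists_hasEigenvalue_forall_re_le (gradingElement n E).dualMap
  obtain ⟨g, hg⟩ := hμ.exists_hasEigenvector
  refine ⟨g, hg.2, fun i j hij hi => by_contra fun hne => ?_⟩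
  have key : (gradingElement n E).dualMap (g ∘ₗ E i j) = (μ - (i - j)) • (g ∘ₗ E i j) := by
    have hgrad := hg.apply_eq_smul
    ext v
    have h₁ := congrArg g (LinearMap.congr_fun (hE.gradingElement_mul hi (hij.trans hi)) v)
    have h₂ := LinearMap.congr_fun hgrad (E i j v)
    simp only [Module.End.mul_apply, LinearMap.add_apply, map_add, LinearMap.smul_apply,
      map_zsmul] at h₁
    simp only [zsmul_eq_mul, Int.cast_sub, Int.cast_natCast] at h₁
    simp only [LinearMap.dualMap_apply, LinearMap.smul_apply, smul_eq_mul, LinearMap.comp_apply]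
      at h₂ ⊢
    linear_combination h₂ - h₁
  have hre := hmin _ (Module.End.hasEigenvalue_of_hasEigenvector
    (Module.End.hasEigenvector_iff.2 ⟨Module.End.mem_eigenspace_iff.2 key, hne⟩))
  have : (j : ℝ) < i := by exact_mod_cast hij
  simp only [Complex.sub_re, Complex.natCast_re] at hre
  linarith

lemma IsHighestVector.dual_apply_diag (hξ : IsHighestVector n E lam ξ)
    (hspan : loweredSubmodule n E (fun _ _ => 0) ξ = ⊤) {g : Dual ℂ V}
    (hg : ∀ ⦃i j⦄, j < i → i < n → g ∘ₗ E i j = 0) {i : ℕ} (hi : i < n) :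
    g ∘ₗ E i i = lam i • g := by
  have hle : loweredSubmodule n E (fun _ _ => 0) ξ ≤ LinearMap.ker (g ∘ₗ E i i - lam i • g) := by
    refine loweredSubmodule_le_ker _ (by simp [hξ.diag hi]) (fun k l hlk hk m => ?_) (by simp)
    have hkl := LinearMap.congr_fun (hg hlk hk)
    have hcomm := congrArg g (LinearMap.congr_fun (hξ.rel hi hi hk (hlk.trans hk)) m)
    simp only [LinearMap.comp_apply, LinearMap.zero_apply] at hkl
    simp only [Module.End.mul_apply, LinearMap.add_apply, LinearMap.sub_apply, map_add, map_sub]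
      at hcomm
    simp only [LinearMap.sub_apply, LinearMap.comp_apply, LinearMap.smul_apply, hcomm,
      hkl, smul_eq_mul, mul_zero, zero_add, sub_zero]
    split_ifs with hik hli hli
    · subst hik hli
      exact absurd hlk (lt_irrefl _)
    all_goals subst_vars; simp [hkl]
  rw [hspan, top_le_iff, LinearMap.ker_eq_top, sub_eq_zero] at hle
  exact hle

lemma IsHighestVector.exists_lowest [FiniteDimensional ℂ V] (hξ : IsHighestVector n E lam ξ)
    (hne : ξ ≠ 0) (hspan : loweredSubmodule n E (fun _ _ => 0) ξ = ⊤) :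
    ∃ φ : Dual ℂ V, φ ξ = 1 ∧ IsHighestVector n (contragredient E) lam φ := by
  have := nontrivial_of_ne ξ 0 hne
  obtain ⟨g, hg, hlower⟩ := hξ.rel.exists_dual_ne_zero_lower_eq_zero
  have hgξ : g ξ ≠ 0 := by
    intro h
    refine hg (LinearMap.ker_eq_top.1 (top_le_iff.1 (hspan ▸ loweredSubmodule_le_ker g h ?_ ?_)))
    · exact fun i j hij hi => LinearMap.congr_fun (hlower hij hi)
    · simp
  refine ⟨(g ξ)⁻¹ • g, by simp [hgξ], hξ.rel.transpose.map (dualMapAlgHom ℂ V), ?_, ?_⟩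
  · intro i j hij hj
    rw [map_smul, contragredient, LinearMap.dualMap_apply', hlower hij hj, smul_zero]
  · intro i hi
    rw [map_smul, contragredient, LinearMap.dualMap_apply', hξ.dual_apply_diag hspan hlower hi,
      smul_comm]

end LowestFunctional

section Irreducibility

/-- A family of operators acts irreducibly if it has no proper nonzero invariant subspace. -/
def ActsIrreducibly {ι 𝕜 W : Type*} [Ring 𝕜] [AddCommGroup W] [Module 𝕜 W]
    (T : ι → End 𝕜 W) : Prop :=
  ∀ U : Submodule 𝕜 W, (∀ i, ∀ v ∈ U, T i v ∈ U) → U = ⊥ ∨ U = ⊤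

namespace ActsIrreducibly

variable {ι 𝕜 W W' : Type*} [Field 𝕜] [AddCommGroup W] [Module 𝕜 W] [AddCommGroup W']
  [Module 𝕜 W'] {T : ι → End 𝕜 W} {T' : ι → End 𝕜 W'}

lemma dualMap [FiniteDimensional 𝕜 W] (h : ActsIrreducibly T) :
    ActsIrreducibly fun i => LinearMap.dualMap (T i) := by
  intro N hN
  rw [← Subspace.dualCoannihilator_dualAnnihilator_eq (W := N)]
  have hinv : ∀ i, ∀ v ∈ N.dualCoannihilator, T i v ∈ N.dualCoannihilator := by
    intro i v hv
    rw [Submodule.mem_dualCoannihilator] at hv ⊢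
    exact fun f hf => hv _ (hN i f hf)
  exact (h _ hinv).symm.imp (fun h => by simp [h]) fun h => by simp [h]

lemma of_linearEquiv (e : W' ≃ₗ[𝕜] W) (he : ∀ i v, e (T' i v) = T i (e v))
    (h : ActsIrreducibly T) : ActsIrreducibly T' := by
  intro N hN
  have hinv : ∀ i, ∀ v ∈ N.map e.toLinearMap, T i v ∈ N.map e.toLinearMap := by
    rintro i _ ⟨v, hv, rfl⟩
    exact ⟨T' i v, hN i v hv, he i v⟩
  exact (h _ hinv).imp Submodule.map_eq_bot_iff.1 Submodule.map_eq_top_iff.1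

end ActsIrreducibly

end Irreducibility

namespace GLRep

variable {n : ℕ} {lam mu : Fin n → ℂ} (A : GLRep n lam) (B : GLRep n mu)

/-- The operators of a `gl_n`-module, indexed by natural numbers and zero out of range. -/
def op (i j : ℕ) : End ℂ A.V := if h : i < n ∧ j < n then A.E ⟨i, h.1⟩ ⟨j, h.2⟩ else 0

@[simp]
lemma op_val (i j : Fin n) : A.op i j = A.E i j := by
  simp [op]

lemma isGLSystem_op : IsGLSystem n A.op := by
  intro i j k l hi hj hk hl
  lift i to Fin n using hi
  lift j to Fin n using hj
  lift k to Fin n using hk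
  lift l to Fin n using hl
  simpa [Fin.ext_iff, Module.End.mul_eq_comp] using sub_eq_iff_eq_add'.1 (A.commRel i j k l)

lemma isHighestVector_op {w : ℕ → ℂ} (hw : ∀ c : Fin n, lam c = w c) :
    IsHighestVector n A.op w A.hv where
  rel := A.isGLSystem_op
  upper i j hij hj := by
    lift j to Fin n using hj
    lift i to Fin n using hij.trans j.isLt
    rw [op_val, A.hv_upper i j hij]
  diag i hi := by
    lift i to Fin n using hi
    rw [op_val, A.hv_diag, hw]

lemma loweredSubmodule_op : loweredSubmodule n A.op (fun _ _ => 0) A.hv = ⊤ := by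
  have hhv := (A.isHighestVector_op (w := Function.extend Fin.val lam 0)
    fun c => (Fin.val_injective.extend_apply ..).symm).isYangianHighest
  refine (A.irreducible _ fun i j v hv => ?_).resolve_left fun h => A.hv_ne ?_
  · simpa using apply₁_mem_loweredSubmodule hhv hv i.isLt j.isLt
  · rw [← Submodule.mem_bot ℂ, ← h]
    exact self_mem_loweredSubmodule

lemma exists_lowest {w : ℕ → ℂ} (hw : ∀ c : Fin n, lam c = w c) :
    ∃ φ : Dual ℂ A.V, φ A.hv = 1 ∧ IsHighestVector n (contragredient A.op) w φ :=
  (A.isHighestVector_op hw).exists_lowest A.hv_ne A.loweredSubmodule_op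

lemma exists_ne_zero_dual : ∃ φ : Dual ℂ A.V, φ ≠ 0 ∧
    (∀ i j : Fin n, i < j → (A.E j i).dualMap φ = 0) ∧
    ∀ i : Fin n, (A.E i i).dualMap φ = lam i • φ := by
  obtain ⟨φ, hφ, h⟩ := A.exists_lowest (w := Function.extend Fin.val lam 0)
    fun c => (Fin.val_injective.extend_apply ..).symm
  refine ⟨φ, fun h₀ => by simp [h₀] at hφ, fun i j hij => ?_, fun i => ?_⟩
  · simpa [contragredient] using h.upper hij j.isLt
  · simpa [contragredient, Fin.val_injective.extend_apply] using h.diag i.isLt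

/-- The contragredient module: the dual space, on which `E i j` acts by the transpose of the
operator `E j i`. It has the same highest weight as the original module. -/
noncomputable def dual : GLRep n lam where
  V := Dual ℂ A.V
  E i j := (A.E j i).dualMap
  commRel i j k l := by
    have h := congrArg LinearMap.dualMap (A.commRel l k j i)
    ext f v
    have hv := LinearMap.congr_fun (LinearMap.congr_fun h f) v
    simp only [LinearMap.dualMap_apply, LinearMap.sub_apply, LinearMap.comp_apply] at hv ⊢
    rw [map_sub] at hv
    rw [hv]
    simp only [eq_comm (a := k) (b := j), eq_comm (a := i) (b := l)]
    split_ifs <;> simp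
  hv := A.exists_ne_zero_dual.choose
  hv_ne := A.exists_ne_zero_dual.choose_spec.1
  hv_upper := A.exists_ne_zero_dual.choose_spec.2.1
  hv_diag := A.exists_ne_zero_dual.choose_spec.2.2
  irreducible U hU := by
    have h : ActsIrreducibly fun p : Fin n × Fin n => (A.E p.1 p.2 : End ℂ A.V) :=
      fun U hU => A.irreducible U fun i j => hU (i, j)
    exact h.dualMap U fun p => hU p.2 p.1

lemma op_dual : A.dual.op = contragredient A.op := by
  funext i j
  by_cases h : i < n ∧ j < n
  · rw [op, contragredient, op, dif_pos h, dif_pos h.symm]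
    rfl
  · rw [op, contragredient, op, dif_neg h, dif_neg (h ∘ And.symm)]
    exact (map_zero (Dual.transpose (R := ℂ))).symm

variable {A B}

lemma tensorT₁_op (i j : Fin n) : tensorT₁ A.op B.op i j = t1 A B i j := by
  simp [tensorT₁, t1, LinearMap.rTensor, LinearMap.lTensor]

lemma tensorT₂_op (i j : Fin n) : tensorT₂ n A.op B.op i j = t2 A B i j := by
  simp [tensorT₂, t2, ← Fin.sum_univ_eq_sum_range fun a => TensorProduct.map (A.op i a) (B.op a j)]

lemma dualDistribSwap_t1 (i j : Fin n) (x : Dual ℂ B.V ⊗[ℂ] Dual ℂ A.V) :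
    dualDistribSwap ℂ A.V B.V (t1 B.dual A.dual i j x) =
      (t1 A B j i).dualMap (dualDistribSwap ℂ A.V B.V x) := by
  have hdual : t1 B.dual A.dual i j = tensorT₁ (contragredient B.op) (contragredient A.op) i j :=
    (tensorT₁_op i j).symm.trans (congrArg₂ (tensorT₁ · · i j) B.op_dual A.op_dual)
  rw [← tensorT₁_op j i, ← dualDistribSwap_tensorT₁]
  exact congrArg (fun T => dualDistribSwap ℂ A.V B.V (T x)) hdual

lemma dualDistribSwap_t2 (i j : Fin n) (x : Dual ℂ B.V ⊗[ℂ] Dual ℂ A.V) :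
    dualDistribSwap ℂ A.V B.V (t2 B.dual A.dual i j x) =
      (t2 A B j i).dualMap (dualDistribSwap ℂ A.V B.V x) := by
  have hdual :
      t2 B.dual A.dual i j = tensorT₂ n (contragredient B.op) (contragredient A.op) i j :=
    (tensorT₂_op i j).symm.trans (congrArg₂ (tensorT₂ n · · i j) B.op_dual A.op_dual)
  rw [← tensorT₂_op j i, ← dualDistribSwap_tensorT₂]
  exact congrArg (fun T => dualDistribSwap ℂ A.V B.V (T x)) hdual

end GLRep

section Duality

variable {n : ℕ} {lam mu : Fin n → ℂ} {A : GLRep n lam} {B : GLRep n mu}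

/-- The generators `t1` and `t2` as a single family. -/
noncomputable def yangianOps (A : GLRep n lam) (B : GLRep n mu) :
    Fin n × Fin n ⊕ Fin n × Fin n → End ℂ (A.V ⊗[ℂ] B.V) :=
  Sum.elim (fun p => t1 A B p.1 p.2) (fun p => t2 A B p.1 p.2)

lemma yangianIrred2_iff_actsIrreducibly :
    YangianIrred2 A B ↔ ActsIrreducibly (yangianOps A B) :=
  forall_congr' fun U => by simp [yangianOps]

/-- The space `B* ⊗ A*` identified with the dual of `A ⊗ B`. -/
noncomputable def dualDistribSwapEquiv (A : GLRep n lam) (B : GLRep n mu) :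
    Dual ℂ B.V ⊗[ℂ] Dual ℂ A.V ≃ₗ[ℂ] Dual ℂ (A.V ⊗[ℂ] B.V) :=
  TensorProduct.comm ℂ (Dual ℂ B.V) (Dual ℂ A.V) ≪≫ₗ TensorProduct.dualDistribEquiv ℂ A.V B.V

lemma YangianIrred2.dual (h : YangianIrred2 A B) : YangianIrred2 B.dual A.dual := by
  rw [yangianIrred2_iff_actsIrreducibly] at h ⊢
  have hswap : ActsIrreducibly fun s : Fin n × Fin n ⊕ Fin n × Fin n =>
      (yangianOps A B (s.map Prod.swap Prod.swap)).dualMap := fun N hN =>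
    h.dualMap N fun s => by simpa using hN (s.map Prod.swap Prod.swap)
  refine hswap.of_linearEquiv (dualDistribSwapEquiv A B) ?_
  rintro (⟨i, j⟩ | ⟨i, j⟩) x
  exacts [GLRep.dualDistribSwap_t1 i j x, GLRep.dualDistribSwap_t2 i j x]

end Duality

section LoweringSystem

variable {𝕜 V : Type*} [Field 𝕜] [AddCommGroup V] [Module 𝕜 V] {n i k : ℕ}
  {E : ℕ → ℕ → End 𝕜 V} {x : V} {wt r : ℕ → 𝕜} {w : ℕ → V}

lemma IsGLSystem.apply_apply (hE : IsGLSystem n E) {i j k l : ℕ} (hi : i < n) (hj : j < n)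
    (hk : k < n) (hl : l < n) (v : V) :
    E i j (E k l v) = E k l (E i j v) +
      ((if j = k then E i l v else 0) - (if l = i then E k j v else 0)) := by
  have := LinearMap.congr_fun (hE hi hj hk hl) v
  simp only [Module.End.mul_apply, LinearMap.add_apply, LinearMap.sub_apply] at this
  rw [this]
  split_ifs <;> rfl

/-- The vectors produced from a weight vector `x` by the lowering operators of the Mickelsson
algebra: `w a = 0` for `a < i`, `w i = x`, and `w c` is `(r c)⁻¹ • ∑ a ∈ range c, E c a (w a)` for
`i < c ≤ k`. The vector `w k` has the weight of `x` moved by one unit from `i` to `k`. The last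
denominator is normalised to `1`, since the generic value of `r k` may vanish. -/
structure IsLoweringSystem (n i k : ℕ) (E : ℕ → ℕ → End 𝕜 V) (x : V) (wt r : ℕ → 𝕜)
    (w : ℕ → V) : Prop where
  rel : IsGLSystem n E
  lt : i < k
  lt_card : k < n
  diag : ∀ ⦃c⦄, c < n → E c c x = wt c • x
  upper : ∀ ⦃d c⦄, d < c → c < k → E d c x = 0
  upper_last : ∀ ⦃d⦄, d < i → E d k x = 0
  denom_ne_zero : ∀ ⦃c⦄, i < c → c ≤ k → r c ≠ 0
  denom : ∀ ⦃c⦄, i < c → c < k → r c = wt i + c - 1 - i - wt c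
  denom_last : r k = 1
  eq_zero : ∀ ⦃a⦄, a < i → w a = 0
  base : w i = x
  recurrence : ∀ ⦃c⦄, i < c → c ≤ k → r c • w c = ∑ a ∈ range c, E c a (w a)

namespace IsLoweringSystem

lemma map_eq (S : IsLoweringSystem n i k E x wt r w) {a : ℕ} (hia : i < a) (hak : a ≤ k)
    {f : End 𝕜 V} {u : V} (h : ∑ b ∈ range a, f (E a b (w b)) = r a • u) : f (w a) = u := by
  refine smul_right_injective V (S.denom_ne_zero hia hak) ?_
  dsimp only
  rw [← map_smul, S.recurrence hia hak, map_sum, h]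

lemma apply_diag (S : IsLoweringSystem n i k E x wt r w) {a : ℕ} (hak : a ≤ k) {c : ℕ}
    (hc : c < n) :
    E c c (w a) = (wt c - (if c = i then 1 else 0) + (if c = a then 1 else 0)) • w a := by
  have hkn := S.lt_card
  induction a using Nat.strong_induction_on with
  | _ a IH =>
  rcases lt_trichotomy a i with h | rfl | h
  · simp [S.eq_zero h]
  · rw [S.base, S.diag hc, sub_add_cancel]
  · refine S.map_eq h hak ?_
    rw [smul_comm, S.recurrence h hak, smul_sum]
    refine sum_congr rfl fun b hb => ?_
    have hba := mem_range.1 hb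
    rw [S.rel.apply_apply hc hc (by omega) (by omega), IH b hba (by omega), map_smul]
    by_cases hca : c = a
    · subst hca
      simp only [hba.ne, hba.ne', if_true, if_false]
      module
    · by_cases hcb : c = b
      · subst hcb
        simp only [hca, if_true, if_false]
        module
      · simp only [hca, hcb, Ne.symm hcb, if_false]
        module

/-- Above the diagonal the raising operators act on `w` as on a basis of the defining
representation, below it the recurrence applies. -/
lemma sum_apply_of_forall_upper (S : IsLoweringSystem n i k E x wt r w) {a : ℕ} (hak : a ≤ k)
    (hw : ∀ b < a, ∀ d < b, E d b (w b) = w d) {d : ℕ} (hd : d < a) :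
    ∑ b ∈ range a, E d b (w b) = (wt i + a - 1 - i) • w d := by
  have hkn := S.lt_card
  have above : ∑ b ∈ Ico (d + 1) a, E d b (w b) = ((a : 𝕜) - d - 1) • w d := by
    rw [sum_congr rfl fun b hb => hw b (mem_Ico.1 hb).2 d (mem_Ico.1 hb).1, sum_const,
      Nat.card_Ico, ← Nat.cast_smul_eq_nsmul 𝕜, Nat.cast_sub hd]
    push_cast
    module
  rw [← sum_range_add_sum_Ico _ (Nat.succ_le_of_lt hd), above, sum_range_succ,
    S.apply_diag (by omega) (by omega)]
  rcases le_or_gt d i with h | h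
  · have below : ∑ b ∈ range d, E d b (w b) = 0 := sum_eq_zero fun b hb => by
      rw [S.eq_zero ((mem_range.1 hb).trans_le h), map_zero]
    rw [below]
    rcases h.lt_or_eq with h | rfl
    · simp [S.eq_zero h]
    · simp only [if_true]
      module
  · rw [← S.recurrence h (by omega), S.denom h (by omega)]
    simp only [h.ne', if_true, if_false]
    module

lemma apply_upper_of_forall_lt (S : IsLoweringSystem n i k E x wt r w) {a : ℕ} (hia : i < a)
    (hak : a ≤ k) (IH : ∀ b < a, ∀ d c, d < c → c < k → E d c (w b) = if b = c then w d else 0)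
    {d c : ℕ} (hdc : d < c) (hck : c < k) : E d c (w a) = if a = c then w d else 0 := by
  have hkn := S.lt_card
  have summand : ∀ b ∈ range a, E d c (E a b (w b)) = (if b = c then E a b (w d) else 0) +
      ((if c = a then E d b (w b) else 0) - (if b = d then E a c (w b) else 0)) := by
    intro b hb
    have hba := mem_range.1 hb
    rw [S.rel.apply_apply (by omega) (by omega) (by omega) (by omega), IH b hba d c hdc hck,
      apply_ite (E a b), map_zero]
  refine S.map_eq hia hak ?_
  rw [sum_congr rfl summand, sum_add_distrib, sum_sub_distrib, sum_ite_eq', sum_ite_eq']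
  simp only [mem_range]
  rcases lt_trichotomy c a with hca | rfl | hac
  · simp [hca, hca.ne, hca.ne', hdc.trans hca]
  · have row := S.sum_apply_of_forall_upper hak
      (fun b hb e he => by rw [IH b hb e b he (by omega), if_pos rfl]) hdc
    simp only [hdc, if_true, lt_irrefl, if_false, row]
    rw [S.apply_diag (by omega) (by omega), S.denom hia hck, if_neg hia.ne', if_neg hdc.ne']
    module
  · simp only [hac.ne', hac.ne, hac.not_gt, if_false, sum_const_zero, smul_zero]
    split_ifs with hda
    · rw [IH d hda a c hac hck, if_neg hdc.ne]
      simp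
    · simp

lemma apply_upper (S : IsLoweringSystem n i k E x wt r w) {a : ℕ} (hak : a ≤ k) {d c : ℕ}
    (hdc : d < c) (hck : c < k) : E d c (w a) = if a = c then w d else 0 := by
  induction a using Nat.strong_induction_on generalizing d c with
  | _ a IH =>
  rcases le_or_gt a i with h | h
  · have hzero : E d c (w a) = 0 := by
      rcases h.lt_or_eq with h | rfl
      · rw [S.eq_zero h, map_zero]
      · rw [S.base, S.upper hdc hck]
    rw [hzero]
    split_ifs with hac
    · rw [S.eq_zero (by omega)]
    · rfl
  · exact S.apply_upper_of_forall_lt h hak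
      (fun b hb d c hdc hck => IH b hb (by omega) hdc hck) hdc hck

lemma sum_apply_upper (S : IsLoweringSystem n i k E x wt r w) {a d : ℕ} (hak : a ≤ k)
    (hd : d < a) : ∑ b ∈ range a, E d b (w b) = (wt i + a - 1 - i) • w d :=
  S.sum_apply_of_forall_upper hak
    (fun b hb d hd => by rw [S.apply_upper (by omega) hd (by omega), if_pos rfl]) hd

lemma apply_upper_last (S : IsLoweringSystem n i k E x wt r w) {a d : ℕ} (hak : a ≤ k)
    (hd : d < i) : E d k (w a) = 0 := by
  have hkn := S.lt_card
  have hik := S.lt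
  induction a using Nat.strong_induction_on with
  | _ a IH =>
  rcases lt_trichotomy a i with h | rfl | h
  · rw [S.eq_zero h, map_zero]
  · rw [S.base, S.upper_last hd]
  · have summand : ∀ b ∈ range a, E d k (E a b (w b)) = if k = a then E d b (w b) else 0 := by
      intro b hb
      have hba := mem_range.1 hb
      have hbd : (if b = d then E a k (w b) else 0) = 0 :=
        ite_eq_right_iff.2 fun h => by rw [S.eq_zero (h ▸ hd), map_zero]
      rw [S.rel.apply_apply (by omega) (by omega) (by omega) (by omega), IH b hba (by omega), hbd,
        map_zero, zero_add, sub_zero]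
    refine S.map_eq h hak ?_
    rw [sum_congr rfl summand, smul_zero]
    split_ifs
    · rw [S.sum_apply_upper hak (by omega), S.eq_zero hd, smul_zero]
    · exact sum_const_zero

lemma denom_smul_apply_last (S : IsLoweringSystem n i k E x wt r w) {a c : ℕ} (hia : i < a)
    (hak : a < k) (hck : c < k) : r a • E c k (w a) =
      ∑ b ∈ range a, E a b (E c k (w b)) - (if c < a then E a k (w c) else 0) := by
  have hkn := S.lt_card
  have summand : ∀ b ∈ range a,
      E c k (E a b (w b)) = E a b (E c k (w b)) - (if b = c then E a k (w b) else 0) := by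
    intro b hb
    have hba := mem_range.1 hb
    rw [S.rel.apply_apply (by omega) (by omega) (by omega) (by omega), if_neg hak.ne', zero_sub,
      sub_eq_add_neg]
  rw [← map_smul, S.recurrence hia hak.le, map_sum, sum_congr rfl summand, sum_sub_distrib,
    sum_ite_eq']
  simp only [mem_range]

section Symmetric

variable {m : ℕ} (hmk : m ≤ k)
  (hsym : ∀ b d, b < m → d < m → E b k (w d) = E d k (w b))

include hmk hsym

lemma denom_smul_lower_apply_last (S : IsLoweringSystem n i k E x wt r w) {b c : ℕ} (hic : i < c)
    (hcm : c < m) (hbm : b < m) : r c • E m b (E c k (w b)) =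
      ∑ d ∈ range c, E c d (E m b (E d k (w b))) +
        ((if b = c then ∑ d ∈ range c, E m d (E c k (w d)) else 0) -
          (if b < c then E m b (E c k (w b)) else 0)) := by
  have hkn := S.lt_card
  have summand : ∀ d ∈ range c, E m b (E c d (E b k (w d))) =
      E c d (E m b (E d k (w b))) + (if b = c then E m d (E c k (w d)) else 0) := by
    intro d hd
    have hdc := mem_range.1 hd
    rw [S.rel.apply_apply (by omega) (by omega) (by omega) (by omega),
      hsym b d hbm (by omega), if_neg (by omega : ¬ d = m), sub_zero]
    congr 1
    split_ifs with hbc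
    · rw [hbc, hsym d c (by omega) hcm]
    · rfl
  rw [← map_smul, hsym c b hcm hbm, S.denom_smul_apply_last hic (by omega) (by omega), map_sub,
    map_sum, sum_congr rfl summand, sum_add_distrib, add_sub_assoc, apply_ite (E m b), map_zero,
    hsym b c hbm hcm]
  split_ifs <;> simp

/-- Both sides satisfy the same recurrence in `c` and start from the same value. -/
lemma sum_lower_apply_last_eq (S : IsLoweringSystem n i k E x wt r w) {v : ℕ → V}
    (hv_zero : ∀ c < i, v c = 0)
    (hv_base : i < m → ∑ b ∈ range m, E m b (E b k x) = v i)
    (hv : ∀ c, i < c → c < m → r c • v c = ∑ d ∈ range c, E c d (v d)) {c : ℕ} (hcm : c < m) :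
    ∑ b ∈ range m, E m b (E c k (w b)) = v c := by
  induction c using Nat.strong_induction_on with
  | _ c IH =>
  rcases lt_trichotomy c i with h | rfl | h
  · rw [hv_zero c h]
    exact sum_eq_zero fun b hb => by
      rw [S.apply_upper_last ((mem_range.1 hb).le.trans hmk) h, map_zero]
  · rw [← hv_base hcm]
    exact sum_congr rfl fun b hb => by rw [hsym c b hcm (mem_range.1 hb), S.base]
  · have range_eq : (range m).filter (· < c) = range c := by
      ext b
      simp only [mem_filter, mem_range]
      omega
    refine smul_right_injective V (S.denom_ne_zero h (by omega)) ?_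
    dsimp only
    rw [hv c h hcm, smul_sum, sum_congr rfl fun b hb =>
      S.denom_smul_lower_apply_last hmk hsym h hcm (mem_range.1 hb), sum_add_distrib,
      sum_sub_distrib, sum_ite_eq', if_pos (mem_range.2 hcm), ← sum_filter, range_eq, sub_self,
      add_zero, sum_comm]
    refine sum_congr rfl fun d hd => ?_
    have hdc := mem_range.1 hd
    rw [← map_sum, IH d hdc (by omega)]

end Symmetric

section Quadratic

variable (hquad : ∀ a, i < a → a < k → ∑ b ∈ range a, E a b (E b k x) = (r a + 1) • E a k x)
include hquad

lemma apply_last_comm_of_lt (S : IsLoweringSystem n i k E x wt r w) {m c : ℕ} (hmk : m < k)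
    (hcm : c < m) : E c k (w m) = E m k (w c) := by
  induction m using Nat.strong_induction_on generalizing c with
  | _ m IH =>
  rcases le_or_gt m i with hmi | him
  · rw [S.eq_zero (by omega : c < i), S.apply_upper_last hmk.le (by omega), map_zero]
  have hsym : ∀ b d, b < m → d < m → E b k (w d) = E d k (w b) := by
    intro b d hb hd
    rcases lt_trichotomy b d with h | rfl | h
    · exact IH d hd (by omega) h
    · rfl
    · exact (IH b hb (by omega) h).symm
  have hsum : ∑ b ∈ range m, E m b (E c k (w b)) = (r m + 1) • E m k (w c) := by
    refine S.sum_lower_apply_last_eq hmk.le hsym (v := fun c => (r m + 1) • E m k (w c))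
      (fun c hc => by rw [S.eq_zero hc, map_zero, smul_zero])
      (fun _ => by rw [S.base, hquad m him hmk]) (fun c hic hcm => ?_) hcm
    rw [smul_comm, S.denom_smul_apply_last hic (by omega) hmk, if_neg hcm.not_gt, sub_zero,
      smul_sum]
    exact sum_congr rfl fun d _ => (map_smul _ _ _).symm
  refine smul_right_injective V (S.denom_ne_zero him hmk.le) ?_
  dsimp only
  rw [S.denom_smul_apply_last him hmk (by omega), hsum, if_pos hcm]
  module

lemma apply_last_comm (S : IsLoweringSystem n i k E x wt r w) {b d : ℕ} (hb : b < k)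
    (hd : d < k) : E b k (w d) = E d k (w b) := by
  rcases lt_trichotomy b d with h | rfl | h
  · exact S.apply_last_comm_of_lt hquad hd h
  · rfl
  · exact (S.apply_last_comm_of_lt hquad hb h).symm

lemma apply_last_self (S : IsLoweringSystem n i k E x wt r w) {κ : 𝕜}
    (hlast : ∑ a ∈ range k, E k a (E a k x) = κ • x) {c : ℕ} (hc : c < k) :
    E c k (w k) = (κ + (wt i + k - 1 - i - wt k)) • w c := by
  have hkn := S.lt_card
  have hsum : ∑ a ∈ range k, E k a (E c k (w a)) = κ • w c := by
    refine S.sum_lower_apply_last_eq le_rfl (fun b d => S.apply_last_comm hquad)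
      (v := fun c => κ • w c) (fun c hc => by rw [S.eq_zero hc, smul_zero])
      (fun _ => by rw [hlast, S.base]) (fun c hic hck => ?_) hc
    rw [smul_comm, S.recurrence hic hck.le, smul_sum]
    exact sum_congr rfl fun d _ => (map_smul _ _ _).symm
  have summand : ∀ a ∈ range k, E c k (E k a (w a)) =
      E k a (E c k (w a)) + (E c a (w a) - (if a = c then E k k (w a) else 0)) := by
    intro a ha
    have hak := mem_range.1 ha
    rw [S.rel.apply_apply (by omega) hkn hkn (by omega), if_pos rfl]
  refine S.map_eq S.lt le_rfl ?_
  rw [S.denom_last, one_smul, sum_congr rfl summand, sum_add_distrib, sum_sub_distrib, sum_ite_eq',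
    if_pos (mem_range.2 hc), hsum, S.sum_apply_upper le_rfl hc, S.apply_diag hc.le hkn,
    if_neg S.lt.ne', if_neg hc.ne']
  module

end Quadratic

end IsLoweringSystem

end LoweringSystem

section OperatorPair

variable {𝕜 U V W : Type*} [Field 𝕜] [AddCommGroup U] [Module 𝕜 U] [AddCommGroup V] [Module 𝕜 V]
  [AddCommGroup W] [Module 𝕜 W] {n : ℕ}

/-- The value at `u` of the off-diagonal polynomial entry `u • T₁ i j + T₂ i j` of the matrix of
Yangian generators. -/
def yangianEntry (T₁ T₂ : ℕ → ℕ → End 𝕜 W) (u : 𝕜) (i j : ℕ) : End 𝕜 W := u • T₁ i j + T₂ i j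

section Entry

variable {T₁ T₂ : ℕ → ℕ → End 𝕜 W}

lemma IsTransposePair.yangianEntry (u : 𝕜) {i j : ℕ} (hi : i < n) (hj : j < n) :
    IsTransposePair n T₁ T₂ (yangianEntry T₁ T₂ u i j) (yangianEntry T₁ T₂ u j i) :=
  (IsTransposePair.gen₁ hi hj).smul u |>.add (.gen₂ hi hj)

lemma IsYangianSystem.yangianEntry_mul_apply (hT : IsYangianSystem n T₁ T₂) {a c k : ℕ}
    (hac : a < c) (hck : c < k) (hk : k < n) {ζ : W} {p q : 𝕜} (hp : T₁ c c ζ = p • ζ)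
    (hq : T₂ c c ζ = q • ζ) (hzero₁ : T₁ a c ζ = 0) (hzero₂ : T₂ a c ζ = 0) (u v : 𝕜) :
    (u - v) • yangianEntry T₁ T₂ u a c (yangianEntry T₁ T₂ v c k ζ) =
      (u ^ 2 + p * u + q) • yangianEntry T₁ T₂ v a k ζ -
        (v ^ 2 + p * v + q) • yangianEntry T₁ T₂ u a k ζ := by
  have hc : c < n := hck.trans hk
  have ha : a < n := hac.trans hc
  have gl_ac := LinearMap.congr_fun (hT.gl ha hc hc hk) ζ
  have mixed_ac := LinearMap.congr_fun (hT.mixed ha hc hc hk) ζ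
  have mixed_ck := LinearMap.congr_fun (hT.mixed hc hk ha hc) ζ
  have quad_ac := LinearMap.congr_fun (hT.quad ha hc hc hk) ζ
  have mixed_cc := LinearMap.congr_fun (hT.mixed hc hc ha hk) ζ
  have mixed_ak := LinearMap.congr_fun (hT.mixed ha hk hc hc) ζ
  simp only [Module.End.mul_apply, LinearMap.add_apply, LinearMap.sub_apply,
    hac.ne', hck.ne', (hac.trans hck).ne', if_true, if_false, hzero₁, hzero₂, hp, hq, map_zero,
    map_smul, zero_add, sub_zero, zero_sub, sub_self, add_zero]
    at gl_ac mixed_ac mixed_ck quad_ac mixed_cc mixed_ak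
  simp only [yangianEntry, LinearMap.add_apply, LinearMap.smul_apply, map_add, map_smul, gl_ac,
    mixed_ac, quad_ac, mixed_cc, ← mixed_ak, add_neg_eq_zero.1 mixed_ck.symm]
  module

end Entry

variable {E : ℕ → ℕ → End 𝕜 U} {F : ℕ → ℕ → End 𝕜 V} {ξ : U} {lam : ℕ → 𝕜} {i k : ℕ} {x : V}
  {wt r : ℕ → 𝕜} {w : ℕ → V}

/-- The parameter at which the row `c` of Yangian entries lowers `ξ ⊗ w a` to `ξ ⊗ w c`. -/
def rowParam (wt : ℕ → 𝕜) (i c : ℕ) : 𝕜 := -(wt i + c - 1 - i)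

lemma rowParam_succ (c : ℕ) : rowParam wt i (c + 1) = rowParam wt i c - 1 := by
  simp only [rowParam]
  push_cast
  ring

lemma IsHighestVector.yangianEntry_tmul (hξ : IsHighestVector n E lam ξ) (u : 𝕜) {c : ℕ}
    (hc : c < n) (j : ℕ) (v : V) :
    yangianEntry (tensorT₁ E F) (tensorT₂ n E F) u c j (ξ ⊗ₜ[𝕜] v) =
      u • (E c j ξ ⊗ₜ[𝕜] v) + (∑ d ∈ range c, E c d ξ ⊗ₜ[𝕜] F d j v +
        (u + lam c) • (ξ ⊗ₜ[𝕜] F c j v)) := by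
  simp only [yangianEntry, LinearMap.add_apply, LinearMap.smul_apply, tensorT₁_tmul,
    hξ.tensorT₂_tmul hc]
  module

lemma IsHighestVector.yangianEntry_tmul_of_lt (hξ : IsHighestVector n E lam ξ) (u : 𝕜) {a j : ℕ}
    (haj : a < j) (hj : j < n) {v : V} (hv : ∀ d < a, F d j v = 0) :
    yangianEntry (tensorT₁ E F) (tensorT₂ n E F) u a j (ξ ⊗ₜ[𝕜] v) =
      (u + lam a) • (ξ ⊗ₜ[𝕜] F a j v) := by
  rw [hξ.yangianEntry_tmul u (haj.trans hj), hξ.upper haj hj, sum_eq_zero fun d hd => by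
    rw [hv d (mem_range.1 hd), TensorProduct.tmul_zero], TensorProduct.zero_tmul, smul_zero,
    zero_add, zero_add]

namespace IsLoweringSystem

lemma sum_yangianEntry_tmul (S : IsLoweringSystem n i k F x wt r w)
    (hξ : IsHighestVector n E lam ξ) {c : ℕ} (hic : i < c) (hck : c ≤ k) :
    ∑ a ∈ range c,
        yangianEntry (tensorT₁ E F) (tensorT₂ n E F) (rowParam wt i c) c a (ξ ⊗ₜ[𝕜] w a) =
      ((rowParam wt i c + lam c) * r c) • (ξ ⊗ₜ[𝕜] w c) := by
  have cancel : ∀ d ∈ range c, ∑ a ∈ range c, E c d ξ ⊗ₜ[𝕜] F d a (w a) =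
      -(rowParam wt i c • (E c d ξ ⊗ₜ[𝕜] w d)) := by
    intro d hd
    rw [← TensorProduct.tmul_sum, S.sum_apply_upper hck (mem_range.1 hd),
      TensorProduct.tmul_smul, rowParam, neg_smul, neg_neg]
  rw [sum_congr rfl fun a _ => hξ.yangianEntry_tmul _ (hck.trans_lt S.lt_card) a (w a),
    sum_add_distrib, sum_add_distrib, sum_comm, sum_congr rfl cancel, sum_neg_distrib,
    add_neg_cancel_left, ← smul_sum, ← TensorProduct.tmul_sum, ← S.recurrence hic hck,
    TensorProduct.tmul_smul, smul_smul]

section LastVector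

variable (S : IsLoweringSystem n i k F x wt r w)
include S

lemma apply_upper_self {d c : ℕ} (hdc : d < c) (hck : c < k) : F d c (w k) = 0 := by
  rw [S.apply_upper le_rfl hdc hck, if_neg hck.ne']

lemma apply_diag_self {c : ℕ} (hic : i < c) (hck : c < k) : F c c (w k) = wt c • w k := by
  rw [S.apply_diag le_rfl (hck.trans S.lt_card), if_neg hic.ne', if_neg hck.ne, sub_zero, add_zero]

lemma yangianEntry_mul_apply_self (hξ : IsHighestVector n E lam ξ) {a c : ℕ} (hac : a < c)
    (hic : i < c) (hck : c < k) (u v : 𝕜) :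
    (u - v) • yangianEntry (tensorT₁ E F) (tensorT₂ n E F) u a c
        (yangianEntry (tensorT₁ E F) (tensorT₂ n E F) v c k (ξ ⊗ₜ[𝕜] w k)) =
      ((u + lam c) * (u + wt c)) •
          yangianEntry (tensorT₁ E F) (tensorT₂ n E F) v a k (ξ ⊗ₜ[𝕜] w k) -
        ((v + lam c) * (v + wt c)) •
          yangianEntry (tensorT₁ E F) (tensorT₂ n E F) u a k (ξ ⊗ₜ[𝕜] w k) := by
  have hcn := hck.trans S.lt_card
  have hsum : ∀ e ≤ c, ∑ d ∈ range e, E e d ξ ⊗ₜ[𝕜] F d c (w k) = 0 := fun e he =>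
    sum_eq_zero fun d hd => by
      rw [S.apply_upper_self ((mem_range.1 hd).trans_le he) hck, TensorProduct.tmul_zero]
  have hp : tensorT₁ E F c c (ξ ⊗ₜ w k) = (lam c + wt c) • (ξ ⊗ₜ[𝕜] w k) := by
    rw [tensorT₁_tmul, hξ.diag hcn, S.apply_diag_self hic hck, TensorProduct.tmul_smul,
      ← TensorProduct.smul_tmul', add_smul]
  have hq : tensorT₂ n E F c c (ξ ⊗ₜ w k) = (lam c * wt c) • (ξ ⊗ₜ[𝕜] w k) := by
    rw [hξ.tensorT₂_tmul hcn, hsum c le_rfl, S.apply_diag_self hic hck, TensorProduct.tmul_smul,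
      zero_add, smul_smul]
  have hzero₁ : tensorT₁ E F a c (ξ ⊗ₜ w k) = 0 := by
    simp [hξ.upper hac hcn, S.apply_upper_self hac hck]
  have hzero₂ : tensorT₂ n E F a c (ξ ⊗ₜ[𝕜] w k) = 0 := by
    rw [hξ.tensorT₂_tmul (hac.trans hcn), S.apply_upper_self hac hck, TensorProduct.tmul_zero,
      smul_zero, add_zero]
    exact sum_eq_zero fun d hd => by
      rw [S.apply_upper_self ((mem_range.1 hd).trans hac) hck, TensorProduct.tmul_zero]
  rw [(hξ.rel.tensor S.rel).yangianEntry_mul_apply hac hck S.lt_card hp hq hzero₁ hzero₂]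
  module

end LastVector

end IsLoweringSystem

/-- Operators `Y a` with transposes `Y' a` for `a < c`, where `Y a` takes `ξ ⊗ x` to a multiple of
`ξ ⊗ w a` and the `Y' a` assemble the entries `a k` into an operator raising `ξ ⊗ w k`. -/
structure IsPartialOperatorPair (n i k c : ℕ) (E : ℕ → ℕ → End 𝕜 U) (F : ℕ → ℕ → End 𝕜 V) (ξ : U)
    (x : V) (wt : ℕ → 𝕜) (w : ℕ → V) (p s : 𝕜) (Y Y' : ℕ → End 𝕜 (U ⊗[𝕜] V)) : Prop where
  pair : ∀ a < c, IsTransposePair n (tensorT₁ E F) (tensorT₂ n E F) (Y a) (Y' a)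
  lower : ∀ a < c, Y a (ξ ⊗ₜ x) = p • (ξ ⊗ₜ w a)
  raise : ∑ a ∈ range c, Y' a (yangianEntry (tensorT₁ E F) (tensorT₂ n E F) (rowParam wt i c) a k
    (ξ ⊗ₜ w k)) = s • (ξ ⊗ₜ F i k (w k))

namespace IsPartialOperatorPair

variable {c : ℕ} {p s : 𝕜} {Y Y' : ℕ → End 𝕜 (U ⊗[𝕜] V)}

lemma initial (hξ : IsHighestVector n E lam ξ) (S : IsLoweringSystem n i k F x wt r w) :
    IsPartialOperatorPair n i k (i + 1) E F ξ x wt w 1 (rowParam wt i (i + 1) + lam i)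
      (Pi.single i 1) (Pi.single i 1) where
  pair a _ := by
    obtain rfl | h := eq_or_ne a i
    · simpa using IsTransposePair.one
    · simpa [h] using IsTransposePair.zero
  lower a ha := by
    rcases (Nat.lt_succ_iff.1 ha).lt_or_eq with h | rfl
    · simp [h.ne, S.eq_zero h]
    · simp [S.base]
  raise := by
    rw [sum_eq_single_of_mem i (self_mem_range_succ i) fun b _ hb => by simp [hb]]
    simpa using hξ.yangianEntry_tmul_of_lt _ S.lt S.lt_card fun d hd =>
      S.apply_upper_last le_rfl hd

lemma sum_mul_pair (h : IsPartialOperatorPair n i k c E F ξ x wt w p s Y Y') (hcn : c < n)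
    (u : 𝕜) :
    IsTransposePair n (tensorT₁ E F) (tensorT₂ n E F)
      (∑ b ∈ range c, yangianEntry (tensorT₁ E F) (tensorT₂ n E F) u c b * Y b)
      (∑ b ∈ range c, Y' b * yangianEntry (tensorT₁ E F) (tensorT₂ n E F) u b c) :=
  .sum fun b hb => (IsTransposePair.yangianEntry u hcn ((mem_range.1 hb).trans hcn)).mul
    (h.pair b (mem_range.1 hb))

lemma sum_mul_apply (h : IsPartialOperatorPair n i k c E F ξ x wt w p s Y Y')
    (hξ : IsHighestVector n E lam ξ) (S : IsLoweringSystem n i k F x wt r w) (hic : i < c)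
    (hck : c ≤ k) :
    (∑ b ∈ range c, yangianEntry (tensorT₁ E F) (tensorT₂ n E F) (rowParam wt i c) c b * Y b)
        (ξ ⊗ₜ x) = ((rowParam wt i c + lam c) * r c * p) • (ξ ⊗ₜ[𝕜] w c) := by
  rw [LinearMap.sum_apply, sum_congr rfl fun b hb => by
      rw [Module.End.mul_apply, h.lower b (mem_range.1 hb), map_smul], ← smul_sum,
    S.sum_yangianEntry_tmul hξ hic hck, smul_smul, mul_comm p]

/-- With the spectral parameters of two consecutive rows, the cross relation turns the new summand
into a multiple of the old sum and a term which cancels against the rescaled old summands. -/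
lemma raise_succ (h : IsPartialOperatorPair n i k c E F ξ x wt w p s Y Y')
    (hξ : IsHighestVector n E lam ξ) (S : IsLoweringSystem n i k F x wt r w) (hic : i < c)
    (hck : c < k) :
    (rowParam wt i c + lam c) • ∑ a ∈ range c, Y' a (yangianEntry (tensorT₁ E F) (tensorT₂ n E F)
          (rowParam wt i (c + 1)) a k (ξ ⊗ₜ[𝕜] w k)) +
        (r c)⁻¹ • ∑ a ∈ range c,
          Y' a (yangianEntry (tensorT₁ E F) (tensorT₂ n E F) (rowParam wt i c) a c
            (yangianEntry (tensorT₁ E F) (tensorT₂ n E F) (rowParam wt i (c + 1)) c k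
              (ξ ⊗ₜ[𝕜] w k))) =
      ((1 + (r c)⁻¹) * (rowParam wt i (c + 1) + lam c) * s) • (ξ ⊗ₜ[𝕜] F i k (w k)) := by
  have hr := S.denom_ne_zero hic hck.le
  have hwt : rowParam wt i c + wt c = -r c := by
    rw [S.denom hic hck, rowParam]
    ring
  have cross := fun a (ha : a ∈ range c) => congrArg (Y' a) <| S.yangianEntry_mul_apply_self hξ
    (mem_range.1 ha) hic hck (rowParam wt i c) (rowParam wt i (c + 1))
  simp only [rowParam_succ, sub_sub_cancel, one_smul, map_sub, map_smul] at cross ⊢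
  rw [sum_congr rfl cross, sum_sub_distrib, ← smul_sum, ← smul_sum, h.raise, hwt]
  have hwt' : rowParam wt i c - 1 + wt c = -r c - 1 := by linear_combination hwt
  rw [hwt']
  match_scalars
  · field_simp
    ring
  · field_simp
    ring

lemma succ (h : IsPartialOperatorPair n i k c E F ξ x wt w p s Y Y')
    (hξ : IsHighestVector n E lam ξ) (S : IsLoweringSystem n i k F x wt r w) (hic : i < c)
    (hck : c < k) :
    IsPartialOperatorPair n i k (c + 1) E F ξ x wt w ((rowParam wt i c + lam c) * p)
      ((1 + (r c)⁻¹) * (rowParam wt i (c + 1) + lam c) * s)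
      (fun a => if a = c then (r c)⁻¹ • ∑ b ∈ range c,
          yangianEntry (tensorT₁ E F) (tensorT₂ n E F) (rowParam wt i c) c b * Y b
        else (rowParam wt i c + lam c) • Y a)
      (fun a => if a = c then (r c)⁻¹ • ∑ b ∈ range c,
          Y' b * yangianEntry (tensorT₁ E F) (tensorT₂ n E F) (rowParam wt i c) b c
        else (rowParam wt i c + lam c) • Y' a) where
  pair a ha := by
    split_ifs with hac
    · exact (h.sum_mul_pair (hck.trans S.lt_card) _).smul _
    · exact (h.pair a (by omega)).smul _
  lower a ha := by
    split_ifs with hac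
    · rw [LinearMap.smul_apply, h.sum_mul_apply hξ S hic hck.le, smul_smul, hac]
      congr 1
      field_simp [S.denom_ne_zero hic hck.le]
    · rw [LinearMap.smul_apply, h.lower a (by omega), smul_smul]
  raise := by
    rw [sum_range_succ, if_pos rfl, ← h.raise_succ hξ S hic hck]
    congr 1
    · refine (sum_congr rfl fun a ha => ?_).trans smul_sum.symm
      rw [if_neg (mem_range.1 ha).ne, LinearMap.smul_apply]
    · simp only [LinearMap.smul_apply, LinearMap.sum_apply, Module.End.mul_apply]

lemma exists_of_le (hξ : IsHighestVector n E lam ξ) (S : IsLoweringSystem n i k F x wt r w)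
    (hic : i + 1 ≤ c) (hck : c ≤ k) :
    ∃ Y Y', IsPartialOperatorPair n i k c E F ξ x wt w
      (∏ c ∈ Ioo i c, (rowParam wt i c + lam c))
      ((∏ c ∈ Ioo i c, (1 + (r c)⁻¹)) * ∏ c ∈ Ico i c, (rowParam wt i (c + 1) + lam c)) Y Y' := by
  induction c, hic using Nat.le_induction with
  | base =>
    have hIoo : Ioo i (i + 1) = ∅ := by
      ext b
      simp only [mem_Ioo, notMem_empty, iff_false]
      omega
    exact ⟨_, _, by simpa [hIoo] using initial hξ S⟩
  | succ c hic IH =>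
    obtain ⟨Y, Y', h⟩ := IH (by omega)
    have hIoo : Ioo i (c + 1) = insert c (Ioo i c) := by
      ext b
      simp only [mem_Ioo, mem_insert]
      omega
    rw [hIoo, prod_insert (by simp), prod_insert (by simp), prod_Ico_succ_top (by omega),
      mul_comm (∏ c ∈ Ico i c, _), mul_mul_mul_comm]
    exact ⟨_, _, h.succ hξ S hic hck⟩

end IsPartialOperatorPair

lemma IsLoweringSystem.exists_isTransposePair (S : IsLoweringSystem n i k F x wt r w)
    (hξ : IsHighestVector n E lam ξ) :
    ∃ X X' : End 𝕜 (U ⊗[𝕜] V), IsTransposePair n (tensorT₁ E F) (tensorT₂ n E F) X X' ∧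
      X (ξ ⊗ₜ x) = (∏ c ∈ Ioc i k, (lam c - (wt i + c - 1 - i))) • (ξ ⊗ₜ w k) ∧
      X' (ξ ⊗ₜ w k) = ((∏ c ∈ Ioo i k, (1 + (r c)⁻¹)) *
        ∏ c ∈ Ico i k, (lam c - (wt i + c - i))) • (ξ ⊗ₜ F i k (w k)) := by
  obtain ⟨Y, Y', h⟩ := IsPartialOperatorPair.exists_of_le hξ S S.lt le_rfl
  refine ⟨_, _, h.sum_mul_pair S.lt_card (rowParam wt i k), ?_, ?_⟩
  · rw [h.sum_mul_apply hξ S S.lt le_rfl, S.denom_last, ← Ioo_insert_right S.lt,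
      prod_insert right_notMem_Ioo]
    simp only [rowParam, mul_one, neg_add_eq_sub]
  · simp only [LinearMap.sum_apply, Module.End.mul_apply]
    rw [h.raise]
    congr 2
    refine prod_congr rfl fun c _ => ?_
    simp only [rowParam]
    push_cast
    ring

end OperatorPair

section Link

open Polynomial

variable {𝕜 U V : Type*} [Field 𝕜] [AddCommGroup U] [Module 𝕜 U] [AddCommGroup V] [Module 𝕜 V]
  {n : ℕ} {E : ℕ → ℕ → End 𝕜 U} {F : ℕ → ℕ → End 𝕜 V} {ξ : U}

/-- Along the deformation `z ↦ centralShift z E`, a Yangian operator takes `ξ ⊗ x` to `P z` times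
`ξ ⊗ y` and its transpose takes `ξ ⊗ y` to `Q z` times `ξ ⊗ x`; the integer `d` is the order of
vanishing of `P` at `0` minus that of `Q`. -/
def IsLinked (n : ℕ) (E : ℕ → ℕ → End 𝕜 U) (F : ℕ → ℕ → End 𝕜 V) (ξ : U) (x y : V) (d : ℤ) :
    Prop :=
  ∃ P Q : 𝕜[X], P ≠ 0 ∧ Q ≠ 0 ∧ (P.rootMultiplicity 0 : ℤ) - Q.rootMultiplicity 0 = d ∧
    ∀ z, ∃ X X' : End 𝕜 (U ⊗[𝕜] V),
      IsTransposePair n (tensorT₁ (centralShift z E) F) (tensorT₂ n (centralShift z E) F) X X' ∧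
        X (ξ ⊗ₜ x) = P.eval z • (ξ ⊗ₜ y) ∧ X' (ξ ⊗ₜ y) = Q.eval z • (ξ ⊗ₜ x)

namespace IsLinked

lemma refl (x : V) : IsLinked n E F ξ x x 0 :=
  ⟨1, 1, one_ne_zero, one_ne_zero, sub_self _, fun _ => ⟨1, 1, .one, by simp, by simp⟩⟩

lemma trans {x y w : V} {d e : ℤ} (h : IsLinked n E F ξ x y d) (h' : IsLinked n E F ξ y w e) :
    IsLinked n E F ξ x w (d + e) := by
  obtain ⟨P, Q, hP, hQ, hd, h⟩ := h
  obtain ⟨P', Q', hP', hQ', he, h'⟩ := h'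
  refine ⟨P * P', Q * Q', mul_ne_zero hP hP', mul_ne_zero hQ hQ', ?_, fun z => ?_⟩
  · rw [rootMultiplicity_mul (mul_ne_zero hP hP'), rootMultiplicity_mul (mul_ne_zero hQ hQ')]
    push_cast
    linarith
  · obtain ⟨X, X', hX, hx, hy⟩ := h z
    obtain ⟨Y, Y', hY, hy', hw⟩ := h' z
    refine ⟨Y * X, X' * Y', hY.mul hX, ?_, ?_⟩
    · rw [Module.End.mul_apply, hx, map_smul, hy', smul_smul, eval_mul]
    · rw [Module.End.mul_apply, hw, map_smul, hy, smul_smul, eval_mul, mul_comm]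

end IsLinked

end Link

section LevelCount

/-- The number of `c ∈ (i, k]` with `L c ∈ [u, v)` minus the number of `c ∈ [i, k)` with
`L c ∈ (u, v]`: the order difference of the link which lowers the entry `v` of a weight to `u`. -/
noncomputable def levelExcess (L : ℕ → ℤ) (i k : ℕ) (u v : ℤ) : ℤ :=
  #{c ∈ Ioc i k | L c ∈ Ico u v} - #{c ∈ Ico i k | L c ∈ Ioc u v}

variable {L : ℕ → ℤ} {i k : ℕ} {t u v : ℤ}

lemma levelExcess_self : levelExcess L i k u u = 0 := by
  simp [levelExcess]

lemma levelExcess_add (htu : t ≤ u) (huv : u ≤ v) :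
    levelExcess L i k u v + levelExcess L i k t u = levelExcess L i k t v := by
  have card_add : ∀ (s : Finset ℕ) (I J : Finset ℤ), Disjoint I J →
      (#{c ∈ s | L c ∈ I ∪ J} : ℤ) = #{c ∈ s | L c ∈ I} + #{c ∈ s | L c ∈ J} := by
    intro s I J h
    simp only [mem_union, filter_or]
    rw [card_union_of_disjoint, Nat.cast_add]
    exact disjoint_filter.2 fun c _ hI hJ => disjoint_left.1 h hI hJ
  rw [levelExcess, levelExcess, levelExcess, ← Ico_union_Ico_eq_Ico htu huv,
    ← Ioc_union_Ioc_eq_Ioc htu huv, card_add _ _ _ (Ico_disjoint_Ico_consecutive t u v),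
    card_add _ _ _ (Ioc_disjoint_Ioc_of_le le_rfl)]
  ring

lemma levelExcess_pred_self :
    levelExcess L i k (v - 1) v = #{c ∈ Ioc i k | L c = v - 1} - #{c ∈ Ico i k | L c = v} := by
  have hIco : Ico (v - 1) v = {v - 1} := by
    ext
    simp only [mem_Ico, mem_singleton]
    omega
  have hIoc : Ioc (v - 1) v = {v} := by
    ext
    simp only [mem_Ioc, mem_singleton]
    omega
  simp only [levelExcess, hIco, hIoc, mem_singleton]

lemma levelExcess_apply_eq (hL : StrictAnti L) (hik : i < k) (hv : L k < v) :
    levelExcess L i k (L k) v = 1 + #{c ∈ Ioo i k | L c < v} - #{c ∈ Ico i k | L c ≤ v} := by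
  have hIoc : {c ∈ Ioc i k | L c ∈ Ico (L k) v} = insert k {c ∈ Ioo i k | L c < v} := by
    ext c
    have := hL.antitone (a := c) (b := k)
    grind
  have hIco : {c ∈ Ico i k | L c ∈ Ioc (L k) v} = {c ∈ Ico i k | L c ≤ v} := by
    ext c
    have := hL (a := c) (b := k)
    grind
  rw [levelExcess, hIoc, hIco, card_insert_of_notMem (by simp)]
  push_cast
  ring

lemma levelExcess_eq_one (hL : StrictAnti L) (hik : i < k) (hkv : L k < v)
    (hv : ∀ r, i ≤ r → r < k → L r ≤ v → r ≠ i ∧ L r ≠ v) :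
    levelExcess L i k (L k) v = 1 := by
  have : {c ∈ Ico i k | L c ≤ v} = {c ∈ Ioo i k | L c < v} := by
    ext c
    grind
  rw [levelExcess_apply_eq hL hik hkv, this, add_sub_cancel_right]

lemma levelExcess_eq_zero (hL : StrictAnti L) {r : ℕ} (hir : i ≤ r) (hrk : r < k) (hrv : L r ≤ v)
    (hr : r = i ∨ L r = v) : levelExcess L i k (L k) v = 0 := by
  have : {c ∈ Ico i k | L c ≤ v} = insert r {c ∈ Ioo i k | L c < v} := by
    ext c
    have := hL.lt_iff_gt (a := c) (b := r)
    have := hL.lt_iff_gt (a := r) (b := c)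
    grind
  rw [levelExcess_apply_eq hL (hir.trans_lt hrk) ((hL hrk).trans_le hrv), this,
    card_insert_of_notMem (by grind)]
  push_cast
  ring

end LevelCount

section Stage

open Polynomial

variable {𝕜 U V : Type*} [Field 𝕜] [AddCommGroup U] [Module 𝕜 U] [AddCommGroup V] [Module 𝕜 V]
  {n i k : ℕ} {E : ℕ → ℕ → End 𝕜 U} {F : ℕ → ℕ → End 𝕜 V} {ξ : U} {β κ : 𝕜} {K L M : ℕ → ℤ}
  {x : V}

/-- The integral weight `K` with `s` moved from the entry `i` to the entry `k`. -/
def moveWeight (K : ℕ → ℤ) (i k : ℕ) (s : ℤ) (c : ℕ) : ℤ :=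
  K c - (if c = i then s else 0) + (if c = k then s else 0)

lemma moveWeight_left (h : i < k) (s : ℤ) : moveWeight K i k s i = K i - s := by
  simp [moveWeight, h.ne]

lemma moveWeight_right (h : i < k) (s : ℤ) : moveWeight K i k s k = K k + s := by
  simp [moveWeight, h.ne']

lemma moveWeight_of_ne {c : ℕ} (hci : c ≠ i) (hck : c ≠ k) (s : ℤ) :
    moveWeight K i k s c = K c := by
  simp [moveWeight, hci, hck]

lemma moveWeight_zero : moveWeight K i k 0 = K := by
  ext c
  simp [moveWeight]

lemma moveWeight_moveWeight (s t : ℤ) :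
    moveWeight (moveWeight K i k s) i k t = moveWeight K i k (s + t) := by
  ext c
  unfold moveWeight
  split_ifs <;> ring

/-- A weight vector of weight `β + K c + c` from which lowering systems towards `k` can be
iterated: `quad` and `quad_last` survive each step and determine the raising operators `F c k`. -/
structure IsLoweringStage (n i k : ℕ) (F : ℕ → ℕ → End 𝕜 V) (β : 𝕜) (K : ℕ → ℤ) (κ : 𝕜) (x : V) :
    Prop where
  rel : IsGLSystem n F
  lt : i < k
  lt_card : k < n
  diag : ∀ ⦃c⦄, c < n → F c c x = (β + K c + c) • x
  upper : ∀ ⦃d c⦄, d < c → c < k → F d c x = 0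
  upper_last : ∀ ⦃d⦄, d < i → F d k x = 0
  quad : ∀ ⦃a⦄, i < a → a < k → ∑ b ∈ range a, F a b (F b k x) = ((K i : 𝕜) - K a) • F a k x
  quad_last : ∑ a ∈ range k, F k a (F a k x) = κ • x

/-- The vectors `w a` of a lowering system with denominators `r`. -/
noncomputable def loweringVector (F : ℕ → ℕ → End 𝕜 V) (i : ℕ) (x : V) (r : ℕ → 𝕜) (c : ℕ) : V :=
  if c < i then 0 else if c = i then x else
    (r c)⁻¹ • ∑ a : Fin c, F c a (loweringVector F i x r a)
termination_by c
decreasing_by exact a.2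

namespace IsLoweringStage

variable (S : IsLoweringStage n i k F β K κ x)
include S

lemma exists_isLoweringSystem [CharZero 𝕜] (hK : ∀ c, i < c → c < k → K c < K i - 1) :
    ∃ r w, IsLoweringSystem n i k F x (fun c => β + K c + c) r w ∧
      ∀ c, i < c → c < k → r c = ((K i - 1 - K c : ℤ) : 𝕜) := by
  obtain ⟨r, hr, hrk⟩ : ∃ r : ℕ → 𝕜, (∀ c < k, r c = (K i - 1 - K c : ℤ)) ∧ r k = 1 :=
    ⟨fun c => if c = k then 1 else (K i - 1 - K c : ℤ), fun c hck => if_neg hck.ne, if_pos rfl⟩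
  have hr₀ : ∀ c, i < c → c ≤ k → r c ≠ 0 := by
    intro c hic hck
    rcases hck.lt_or_eq with hck | rfl
    · have := hK c hic hck
      rw [hr c hck]
      exact_mod_cast (by omega : K i - 1 - K c ≠ 0)
    · rw [hrk]
      exact one_ne_zero
  refine ⟨r, loweringVector F i x r, ⟨S.rel, S.lt, S.lt_card, S.diag, S.upper, S.upper_last, hr₀,
    fun c _ hck => ?_, hrk, fun a ha => ?_, ?_, fun c hic hck => ?_⟩, fun c _ hck => hr c hck⟩
  · rw [hr c hck]
    push_cast
    ring
  · rw [loweringVector, if_pos ha]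
  · rw [loweringVector, if_neg (lt_irrefl i), if_pos rfl]
  · rw [loweringVector, if_neg (by omega), if_neg hic.ne', smul_smul,
      mul_inv_cancel₀ (hr₀ c hic hck), one_smul, sum_range]

variable {r : ℕ → 𝕜} {w : ℕ → V}

lemma apply_last_self (W : IsLoweringSystem n i k F x (fun c => β + K c + c) r w)
    (hr : ∀ c, i < c → c < k → r c = ((K i - 1 - K c : ℤ) : 𝕜)) {c : ℕ} (hck : c < k) :
    F c k (w k) = (κ + (K i - 1 - K k)) • w c := by
  rw [W.apply_last_self (fun a hia hak => ?_) S.quad_last hck]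
  · congr 1
    ring
  · rw [S.quad hia hak, hr a hia hak]
    congr 1
    push_cast
    ring

lemma lower (W : IsLoweringSystem n i k F x (fun c => β + K c + c) r w)
    (hr : ∀ c, i < c → c < k → r c = ((K i - 1 - K c : ℤ) : 𝕜)) :
    IsLoweringStage n i k F β (moveWeight K i k 1) (κ + (K i - 1 - K k)) (w k) where
  rel := S.rel
  lt := S.lt
  lt_card := S.lt_card
  diag c hc := by
    rw [W.apply_diag le_rfl hc, moveWeight]
    congr 1
    push_cast
    ring
  upper d c hdc hck := W.apply_upper_self hdc hck
  upper_last d hd := W.apply_upper_last le_rfl hd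
  quad a hia hak := by
    rw [sum_congr rfl fun b hb => by
        rw [S.apply_last_self W hr ((mem_range.1 hb).trans hak), map_smul], ← smul_sum,
      ← W.recurrence hia hak.le, hr a hia hak, S.apply_last_self W hr hak, moveWeight_left S.lt,
      moveWeight_of_ne hia.ne' hak.ne, smul_comm]
    push_cast
    rfl
  quad_last := by
    rw [sum_congr rfl fun b hb => by rw [S.apply_last_self W hr (mem_range.1 hb), map_smul],
      ← smul_sum, ← W.recurrence S.lt le_rfl, W.denom_last, one_smul]

end IsLoweringStage

lemma rootMultiplicity_zero_prod_X_sub_C [CharZero 𝕜] (s : Finset ℕ) (L : ℕ → ℤ) (v : ℤ) :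
    (∏ c ∈ s, (X - C ((v - L c : ℤ) : 𝕜))).rootMultiplicity 0 = #{c ∈ s | L c = v} := by
  classical
  have hroots : (∏ c ∈ s, (X - C ((v - L c : ℤ) : 𝕜))).roots =
      s.val.map fun c => ((v - L c : ℤ) : 𝕜) := by
    rw [← roots_multiset_prod_X_sub_C (s.val.map _), Multiset.map_map]
    rfl
  rw [← count_roots, hroots, Multiset.count_map, ← filter_val, card_val]
  congr 1
  ext c
  simp only [mem_filter, eq_comm (a := (0 : 𝕜)), Int.cast_eq_zero, sub_eq_zero, eq_comm (a := v)]

section Chain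

variable [CharZero 𝕜] (hE : IsHighestVector n E (fun c => β + L c + c) ξ)
include hE

namespace IsLoweringStage

lemma isLinked (S : IsLoweringStage n i k F β K κ x) {r : ℕ → 𝕜} {w : ℕ → V}
    (W : IsLoweringSystem n i k F x (fun c => β + K c + c) r w)
    (hr : ∀ c, i < c → c < k → r c = ((K i - 1 - K c : ℤ) : 𝕜))
    (hK : ∀ c, i < c → c < k → K c < K i - 1) (hκ : κ + (K i - 1 - K k) ≠ 0) :
    IsLinked n E F ξ x (w k) (levelExcess L i k (K i - 1) (K i)) := by
  set q : 𝕜 := (∏ c ∈ Ioo i k, (1 + (r c)⁻¹)) * (κ + (K i - 1 - K k)) with hq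
  have hq₀ : q ≠ 0 := by
    refine mul_ne_zero (prod_ne_zero_iff.2 fun c hc h => ?_) hκ
    obtain ⟨hic, hck⟩ := mem_Ioo.1 hc
    have hrc := W.denom_ne_zero hic hck.le
    have hsucc : r c + 1 = 0 := by
      field_simp at h
      rwa [mul_zero] at h
    rw [hr c hic hck] at hsucc
    have := hK c hic hck
    have : K i - 1 - K c + 1 = 0 := by exact_mod_cast hsucc
    omega
  have monic (s v) : (∏ c ∈ s, (X - C ((v - L c : ℤ) : 𝕜))).Monic :=
    monic_prod_X_sub_C _ _
  refine ⟨_, _, (monic (Ioc i k) (K i - 1)).ne_zero,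
    mul_ne_zero (C_ne_zero.2 hq₀) (monic (Ico i k) (K i)).ne_zero, ?_, fun z => ?_⟩
  · rw [rootMultiplicity_mul (mul_ne_zero (C_ne_zero.2 hq₀) (monic _ _).ne_zero),
      rootMultiplicity_C, zero_add, rootMultiplicity_zero_prod_X_sub_C,
      rootMultiplicity_zero_prod_X_sub_C, levelExcess_pred_self]
  · obtain ⟨X, X', hX, hx, hw⟩ := W.exists_isTransposePair (hE.centralShift z)
    refine ⟨X, X', hX, ?_, ?_⟩
    · rw [hx, eval_prod]
      congr 1
      refine prod_congr rfl fun c _ => ?_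
      simp only [eval_sub, eval_X, eval_C]
      push_cast
      ring
    · rw [hw, S.apply_last_self W hr S.lt, W.base, TensorProduct.tmul_smul, smul_smul, eval_mul,
        eval_C, eval_prod, hq, mul_right_comm]
      congr 2
      refine prod_congr rfl fun c _ => ?_
      simp only [eval_sub, eval_X, eval_C]
      push_cast
      ring

lemma exists_isLinked (S : IsLoweringStage n i k F β K 0 x) (s : ℕ)
    (hK : ∀ c, i < c → c ≤ k → K c < K i - s) :
    ∃ y, IsLoweringStage n i k F β (moveWeight K i k s) (s * (K i - K k - s)) y ∧
      IsLinked n E F ξ x y (levelExcess L i k (K i - s) (K i)) := by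
  have hik := S.lt
  induction s with
  | zero =>
    refine ⟨x, by simpa [moveWeight_zero] using S, ?_⟩
    simpa [levelExcess_self] using IsLinked.refl x
  | succ s IH =>
    push_cast at hK ⊢
    obtain ⟨y, Sy, hxy⟩ := IH fun c hic hck => by linarith [hK c hic hck]
    have hK' : ∀ c, i < c → c < k → moveWeight K i k s c < moveWeight K i k s i - 1 := by
      intro c hic hck
      rw [moveWeight_of_ne hic.ne' hck.ne, moveWeight_left hik]
      linarith [hK c hic hck.le]
    have hκ : (s : 𝕜) * (K i - K k - s) +
        (moveWeight K i k s i - 1 - moveWeight K i k s k : ℤ) =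
          (s + 1) * (K i - K k - (s + 1)) := by
      rw [moveWeight_left hik, moveWeight_right hik]
      push_cast
      ring
    have hκ₀ : ((s : 𝕜) + 1) * (K i - K k - (s + 1)) ≠ 0 := by
      have := hK k hik le_rfl
      exact_mod_cast (mul_ne_zero (by omega) (by omega) :
        ((s : ℤ) + 1) * (K i - K k - (s + 1)) ≠ 0)
    push_cast at hκ
    obtain ⟨r, w, W, hr⟩ := Sy.exists_isLoweringSystem hK'
    refine ⟨w k, ?_, ?_⟩
    · have := Sy.lower W hr
      rwa [hκ, moveWeight_moveWeight] at this
    · have := hxy.trans (Sy.isLinked hE W hr hK' (hκ ▸ hκ₀))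
      rwa [moveWeight_left hik, sub_sub, levelExcess_add (by omega) (by omega)] at this

end IsLoweringStage

end Chain

/-- A vector of weight `β + K c + c`, singular up to `k`, whose entry `i` can be lowered from
`M i` to `L k`. -/
structure IsChainVector (n i k : ℕ) (F : ℕ → ℕ → End 𝕜 V) (β : 𝕜) (L M K : ℕ → ℤ) (x : V) :
    Prop where
  rel : IsGLSystem n F
  lt : i < k
  lt_card : k < n
  diag : ∀ ⦃c⦄, c < n → F c c x = (β + K c + c) • x
  upper : ∀ ⦃d c⦄, d < c → c ≤ k → F d c x = 0
  weight_eq : ∀ ⦃c⦄, c ≤ i → K c = M c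
  weight_lt : ∀ ⦃c⦄, i < c → c ≤ k → K c < L k
  lt_weight : L k < M i

namespace IsChainVector

lemma isLoweringStage (h : IsChainVector n i k F β L M K x) :
    IsLoweringStage n i k F β K 0 x where
  rel := h.rel
  lt := h.lt
  lt_card := h.lt_card
  diag := h.diag
  upper _ _ hdc hck := h.upper hdc hck.le
  upper_last _ hd := h.upper (hd.trans h.lt) le_rfl
  quad a _ hak := by
    rw [h.upper hak le_rfl, smul_zero]
    exact sum_eq_zero fun b hb => by
      rw [h.upper ((mem_range.1 hb).trans hak) le_rfl, map_zero]
  quad_last := by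
    rw [zero_smul]
    exact sum_eq_zero fun b hb => by rw [h.upper (mem_range.1 hb) le_rfl, map_zero]

lemma prev (h : IsChainVector n (i + 1) k F β L M K x) (hL : StrictAnti L) (hM : StrictAnti M)
    {s : ℤ} {y : V} (hs : M (i + 1) - s = L k)
    (S : IsLoweringStage n (i + 1) k F β (moveWeight K (i + 1) k s) κ y) {r : ℕ} (hir : i < r)
    (hrk : r < k) (hr : L r ≤ M (i + 1)) :
    IsChainVector n i r F β L M (moveWeight K (i + 1) k s) y where
  rel := h.rel
  lt := hir
  lt_card := hrk.trans h.lt_card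
  diag := S.diag
  upper _ _ hdc hcr := S.upper hdc (hcr.trans_lt hrk)
  weight_eq c hc := by
    rw [moveWeight_of_ne (by omega) (by omega), h.weight_eq (by omega)]
  weight_lt c hic hcr := by
    obtain rfl | hne := eq_or_ne c (i + 1)
    · rw [moveWeight_left h.lt, h.weight_eq le_rfl, hs]
      exact hL hrk
    · rw [moveWeight_of_ne hne (by omega)]
      exact (h.weight_lt (by omega) (by omega)).trans (hL hrk)
  lt_weight := hr.trans_lt (hM i.lt_succ_self)

variable [CharZero 𝕜] (hE : IsHighestVector n E (fun c => β + L c + c) ξ)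
include hE

lemma exists_isLinked (h : IsChainVector n i k F β L M K x) :
    ∃ (s : ℤ) (κ : 𝕜) (y : V), M i - s = L k ∧
      IsLoweringStage n i k F β (moveWeight K i k s) κ y ∧
      IsLinked n E F ξ x y (levelExcess L i k (L k) (M i)) := by
  obtain ⟨s, hs⟩ := Int.eq_ofNat_of_zero_le (sub_nonneg.2 h.lt_weight.le)
  have hs' : M i - s = L k := by omega
  obtain ⟨y, S, hxy⟩ := h.isLoweringStage.exists_isLinked hE s fun c hic hck => by
    rw [h.weight_eq le_rfl, hs']
    exact h.weight_lt hic hck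
  rw [h.weight_eq le_rfl, hs'] at hxy
  exact ⟨s, _, y, hs', S, hxy⟩

/-- A lowering from `i` to `k` gives order difference `1` unless it passes an entry `L r = M i` or
`i` itself has `L i ≤ M i`; in these cases one continues with the entry `i - 1`. -/
lemma exists_isLinked_one (hL : StrictAnti L) (hM : StrictAnti M) {i₀ j₀ : ℕ}
    (hi₀ : M i₀ < L i₀) (hne : ∀ s, i₀ ≤ s → s ≤ j₀ → L s ≠ M i₀) (hi : i₀ ≤ i) (hk : k ≤ j₀)
    (h : IsChainVector n i k F β L M K x) : ∃ y, IsLinked n E F ξ x y 1 := by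
  induction i, hi using Nat.le_induction generalizing k K x with
  | base =>
    obtain ⟨_, _, y, -, -, hxy⟩ := h.exists_isLinked hE
    rw [levelExcess_eq_one hL h.lt h.lt_weight fun r hir hrk hr =>
      ⟨by rintro rfl; omega, hne r hir (by omega)⟩] at hxy
    exact ⟨y, hxy⟩
  | succ i _ IH =>
    obtain ⟨s, _, y, hs, S, hxy⟩ := h.exists_isLinked hE
    by_cases hr : ∃ r, i + 1 ≤ r ∧ r < k ∧ L r ≤ M (i + 1) ∧ (r = i + 1 ∨ L r = M (i + 1))
    · obtain ⟨r, hir, hrk, hrM, hr⟩ := hr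
      rw [levelExcess_eq_zero hL hir hrk hrM hr] at hxy
      obtain ⟨w, hyw⟩ := IH (by omega) (h.prev hL hM hs S hir hrk hrM)
      exact ⟨w, hxy.trans hyw⟩
    · push Not at hr
      rw [levelExcess_eq_one hL h.lt h.lt_weight hr] at hxy
      exact ⟨y, hxy⟩

end IsChainVector

/-- The position of the entries of two decreasing sequences between `i` and `j` for which the
tensor product degenerates. -/
structure IsInterlaced (L M : ℕ → ℤ) (i j : ℕ) : Prop where
  last_lt_last : M j < L j
  last_lt_first : L j < M i
  first_lt_first : M i < L i
  ne_first : ∀ s, i ≤ s → s ≤ j → L s ≠ M i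
  ne_last : ∀ s, i ≤ s → s ≤ j → M s ≠ L j

lemma IsInterlaced.exists_isLinked_one [CharZero 𝕜] {i j : ℕ} (h : IsInterlaced L M i j)
    (hij : i < j) (hj : j < n) (hL : StrictAnti L) (hM : StrictAnti M)
    (hE : IsHighestVector n E (fun c => β + L c + c) ξ) {η : V}
    (hF : IsHighestVector n F (fun c => β + M c + c) η) : ∃ y, IsLinked n E F ξ η y 1 := by
  set p := Nat.findGreatest (fun c => L j < M c) j with hp
  have hpM : L j < M p := Nat.findGreatest_spec (P := fun c => L j < M c) hij.le h.last_lt_first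
  have hip : i ≤ p := Nat.le_findGreatest hij.le h.last_lt_first
  have hpj : p < j := (Nat.findGreatest_le j).lt_of_ne fun hpj => by
    rw [← hp] at hpj
    exact absurd h.last_lt_last (by rw [hpj] at hpM; omega)
  have chain : IsChainVector n p j F β L M M η :=
    { rel := hF.rel
      lt := hpj
      lt_card := hj
      diag := hF.diag
      upper := fun d c hdc hcj => hF.upper hdc (hcj.trans_lt hj)
      weight_eq := fun _ _ => rfl
      weight_lt := fun c hpc hcj => by
        have := Nat.findGreatest_is_greatest hpc hcj
        have := h.ne_last c (by omega) hcj
        omega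
      lt_weight := hpM }
  exact chain.exists_isLinked_one hE hL hM h.first_lt_first h.ne_first hip le_rfl

end Stage

section Deformation

open Polynomial

/-- A family of vectors indexed by the scalars whose coordinates are polynomial functions. -/
def IsPolynomialFamily {𝕜 W : Type*} [CommRing 𝕜] [AddCommGroup W] [Module 𝕜 W]
    (x : 𝕜 → W) : Prop :=
  ∀ ψ : Dual 𝕜 W, ∃ p : 𝕜[X], ∀ z, ψ (x z) = p.eval z

namespace IsPolynomialFamily

section CommRing

variable {𝕜 W W' : Type*} [CommRing 𝕜] [AddCommGroup W] [Module 𝕜 W] [AddCommGroup W']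
  [Module 𝕜 W'] {x y : 𝕜 → W}

lemma affine (a b : W) : IsPolynomialFamily fun z : 𝕜 => a + z • b := fun ψ =>
  ⟨C (ψ a) + X * C (ψ b), fun z => by simp [mul_comm z]⟩

lemma const (a : W) : IsPolynomialFamily fun _ : 𝕜 => a := by
  simpa using affine (𝕜 := 𝕜) a 0

lemma add (hx : IsPolynomialFamily x) (hy : IsPolynomialFamily y) :
    IsPolynomialFamily fun z => x z + y z := fun ψ => by
  obtain ⟨p, hp⟩ := hx ψ
  obtain ⟨q, hq⟩ := hy ψ
  exact ⟨p + q, by simp [hp, hq]⟩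

lemma map (hx : IsPolynomialFamily x) (f : W →ₗ[𝕜] W') :
    IsPolynomialFamily fun z => f (x z) := fun ψ => hx (ψ ∘ₗ f)

lemma exists_eval_smul_eq_sum {ι : Type*} [Fintype ι] {b : Basis ι 𝕜 W} {v : ι → 𝕜 → W}
    (hv : ∀ j, IsPolynomialFamily (v j)) (hv₀ : ∀ j, v j 0 = b j) (w : W) :
    ∃ (d : 𝕜[X]) (a : ι → 𝕜[X]), d.eval 0 = 1 ∧
      ∀ z, d.eval z • w = ∑ j, (a j).eval z • v j z := by
  classical
  choose p hp using fun i j => hv j (b.coord i)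
  let M : Matrix ι ι 𝕜[X] := Matrix.of p
  let u : ι → 𝕜[X] := fun i => C (b.repr w i)
  have eval_det : M.det.eval 0 = 1 := by
    have hM : (evalRingHom 0).mapMatrix M = 1 := by
      ext i j
      simp [M, ← hp, hv₀, Matrix.one_apply, Finsupp.single_apply, eq_comm]
    rw [← coe_evalRingHom, RingHom.map_det, hM, Matrix.det_one]
  obtain ⟨a, cramer⟩ : ∃ a, M.mulVec a = M.det • u :=
    ⟨M.adjugate.mulVec u, by
      rw [Matrix.mulVec_mulVec, Matrix.mul_adjugate, Matrix.smul_mulVec, Matrix.one_mulVec]⟩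
  refine ⟨M.det, a, eval_det, fun z => b.ext_elem fun i => ?_⟩
  have coord := congrArg (eval z) (congrFun cramer i)
  simp only [Matrix.mulVec, dotProduct, M, u, eval_finsetSum, Matrix.of_apply, eval_mul, ← hp,
    Pi.smul_apply, smul_eq_mul, eval_C, Basis.coord_apply] at coord
  simp [M, ← coord, mul_comm]

end CommRing

variable {𝕜 W W' W'' : Type*} [Field 𝕜] [AddCommGroup W] [Module 𝕜 W] [FiniteDimensional 𝕜 W]
  [AddCommGroup W'] [Module 𝕜 W'] [FiniteDimensional 𝕜 W'] [AddCommGroup W''] [Module 𝕜 W'']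

lemma map₂ {x : 𝕜 → W} {y : 𝕜 → W'} (hx : IsPolynomialFamily x) (hy : IsPolynomialFamily y)
    (f : W →ₗ[𝕜] W' →ₗ[𝕜] W'') : IsPolynomialFamily fun z => f (x z) (y z) := fun ψ => by
  let b := finBasis 𝕜 W
  let b' := finBasis 𝕜 W'
  choose p hp using fun i => hx (b.coord i)
  choose q hq using fun j => hy (b'.coord j)
  refine ⟨∑ j, ∑ i, q j * p i * C (ψ (f (b i) (b' j))), fun z => ?_⟩
  have expand : f (x z) (y z) = ∑ j, ∑ i, (q j).eval z • (p i).eval z • f (b i) (b' j) := by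
    conv_lhs => rw [← b.sum_repr (x z), ← b'.sum_repr (y z)]
    simp [← hp, ← hq, smul_sum, -Basis.sum_repr]
  simp [expand, eval_finsetSum, mul_assoc]

lemma mul {X Y : 𝕜 → End 𝕜 W} (hX : IsPolynomialFamily X) (hY : IsPolynomialFamily Y) :
    IsPolynomialFamily fun z => X z * Y z :=
  hX.map₂ hY (LinearMap.mul 𝕜 (End 𝕜 W))

end IsPolynomialFamily

variable {𝕜 W : Type*} [Field 𝕜] [AddCommGroup W] [Module 𝕜 W] {n : ℕ}
  {T₁ T₂ : 𝕜 → ℕ → ℕ → End 𝕜 W} {ζ : W} {φ : Dual 𝕜 W}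

/-- The values at `z = 0` of `Y z ζ`, where `Y` is a polynomial family of operators which, together
with its transpose, is generated by the operators `T₁ z i j` and `T₂ z i j`. -/
def polynomialOrbit (n : ℕ) (T₁ T₂ : 𝕜 → ℕ → ℕ → End 𝕜 W) (ζ : W) : Submodule 𝕜 W where
  carrier := {u | ∃ Y Y' : 𝕜 → End 𝕜 W, IsPolynomialFamily Y ∧ IsPolynomialFamily Y' ∧
    (∀ z, IsTransposePair n (T₁ z) (T₂ z) (Y' z) (Y z)) ∧ Y 0 ζ = u}
  zero_mem' := ⟨_, _, .const 0, .const 0, fun _ => .zero, rfl⟩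
  add_mem' := by
    rintro _ _ ⟨X, X', hX, hX', hpair, rfl⟩ ⟨Y, Y', hY, hY', hpair', rfl⟩
    exact ⟨_, _, hX.add hY, hX'.add hY', fun z => (hpair z).add (hpair' z), rfl⟩
  smul_mem' := by
    rintro c _ ⟨Y, Y', hY, hY', hpair, rfl⟩
    exact ⟨_, _, hY.map (c • LinearMap.id), hY'.map (c • LinearMap.id),
      fun z => (hpair z).smul c, rfl⟩

lemma polynomialOrbit_eq_top [FiniteDimensional 𝕜 W]
    (hT₁ : ∀ i j, IsPolynomialFamily fun z => T₁ z i j)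
    (hT₂ : ∀ ⦃i⦄, i < n → ∀ j, IsPolynomialFamily fun z => T₂ z i j) (hζ : ζ ≠ 0)
    (hirr : ∀ U : Submodule 𝕜 W, (∀ i < n, ∀ j < n, ∀ v ∈ U, T₁ 0 i j v ∈ U) →
      (∀ i < n, ∀ j < n, ∀ v ∈ U, T₂ 0 i j v ∈ U) → U = ⊥ ∨ U = ⊤) :
    polynomialOrbit n T₁ T₂ ζ = ⊤ := by
  have self_mem : ζ ∈ polynomialOrbit n T₁ T₂ ζ :=
    ⟨_, _, .const 1, .const 1, fun _ => .one, rfl⟩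
  refine (hirr _ ?_ ?_).resolve_left fun h => hζ ((Submodule.mem_bot 𝕜).1 (h ▸ self_mem))
  · rintro i hi j hj _ ⟨Y, Y', hY, hY', hpair, rfl⟩
    exact ⟨_, _, (hT₁ i j).mul hY, hY'.mul (hT₁ j i), fun z => (hpair z).mul (.gen₁ hj hi), rfl⟩
  · rintro i hi j hj _ ⟨Y, Y', hY, hY', hpair, rfl⟩
    exact ⟨_, _, (hT₂ hi j).mul hY, hY'.mul (hT₂ hj i), fun z => (hpair z).mul (.gen₂ hj hi), rfl⟩

lemma IsTransposePair.apply_apply_eq {S₁ S₂ : ℕ → ℕ → End 𝕜 W} {h₁ h₂ : ℕ → 𝕜}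
    {X X' Y Y' : End 𝕜 W} {v : W} {p : 𝕜} (hX : IsTransposePair n S₁ S₂ X X')
    (hY : IsTransposePair n S₁ S₂ Y' Y) (hζ : IsYangianHighest n S₁ S₂ h₁ h₂ ζ)
    (hφ : IsYangianLowest n S₁ S₂ h₁ h₂ φ) (hXζ : X ζ = p • v) :
    φ (X' (Y ζ)) = p * φ (Y' v) := by
  simpa [hXζ] using ((hY.mul hX).apply_eq hζ hφ).symm

/-- At `z = 0` every vector is of the form `Y 0 ζ`, so Cramer's rule writes `v` as a combination of
vectors `Y z ζ` over rational functions regular at `0`. Contravariance turns this into a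
factorization of `Q` by `P` up to a factor which does not vanish at `0`. -/
lemma rootMultiplicity_le_of_polynomialOrbit_eq_top [Infinite 𝕜] [FiniteDimensional 𝕜 W]
    {h₁ h₂ : 𝕜 → ℕ → 𝕜} (hζ : ∀ z, IsYangianHighest n (T₁ z) (T₂ z) (h₁ z) (h₂ z) ζ)
    (hφ : ∀ z, IsYangianLowest n (T₁ z) (T₂ z) (h₁ z) (h₂ z) φ) (hone : φ ζ = 1)
    (htop : polynomialOrbit n T₁ T₂ ζ = ⊤) {P Q : 𝕜[X]} (hQ : Q ≠ 0) {v : W}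
    (hlink : ∀ z, ∃ X X', IsTransposePair n (T₁ z) (T₂ z) X X' ∧ X ζ = P.eval z • v ∧
      X' v = Q.eval z • ζ) : P.rootMultiplicity 0 ≤ Q.rootMultiplicity 0 := by
  let b := finBasis 𝕜 W
  choose Y Y' hY hY' hpair hY₀ using fun j => (htop ▸ Submodule.mem_top :
    b j ∈ polynomialOrbit n T₁ T₂ ζ)
  obtain ⟨d, a, hd, hv⟩ := IsPolynomialFamily.exists_eval_smul_eq_sum
    (fun j => (hY j).map (LinearMap.applyₗ ζ)) hY₀ v
  choose r hr using fun j => (hY' j).map (LinearMap.applyₗ v) φ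
  have factor : d * Q = P * ∑ j, a j * r j := by
    refine Polynomial.funext fun z => ?_
    obtain ⟨X, X', hX, hXζ, hX'v⟩ := hlink z
    calc (d * Q).eval z = φ (X' (d.eval z • v)) := by simp [hX'v, hone]
      _ = ∑ j, (a j).eval z * φ (X' (Y j z ζ)) := by simp [hv]
      _ = ∑ j, (a j).eval z * (P.eval z * (r j).eval z) := by
        refine sum_congr rfl fun j _ => ?_
        rw [hX.apply_apply_eq (hpair j z) (hζ z) (hφ z) hXζ]
        exact congrArg _ (congrArg _ (hr j z))
      _ = (P * ∑ j, a j * r j).eval z := by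
        simp [eval_finsetSum, mul_sum, mul_left_comm]
  have hd₀ : d ≠ 0 := by
    rintro rfl
    simp at hd
  have hdQ : d * Q ≠ 0 := mul_ne_zero hd₀ hQ
  calc P.rootMultiplicity 0 ≤ (d * Q).rootMultiplicity 0 := by
        rw [factor] at hdQ ⊢
        rw [rootMultiplicity_mul hdQ]
        exact Nat.le_add_right _ _
    _ = Q.rootMultiplicity 0 := by
        rw [rootMultiplicity_mul hdQ, rootMultiplicity_eq_zero (by simp [IsRoot.def, hd]), zero_add]

end Deformation

section CentralDeformation

variable {𝕜 U V : Type*} [Field 𝕜] [AddCommGroup U] [Module 𝕜 U] [AddCommGroup V] [Module 𝕜 V]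
  {n : ℕ} {E : ℕ → ℕ → End 𝕜 U} {F : ℕ → ℕ → End 𝕜 V} {lam mu : ℕ → 𝕜}

lemma centralShift_zero : centralShift 0 E = E := by
  funext i j
  simp [centralShift]

lemma contragredient_centralShift (z : 𝕜) :
    contragredient (centralShift z E) = centralShift z (contragredient E) := by
  funext i j
  ext φ u
  by_cases h : i = j <;> simp [contragredient, centralShift, h, eq_comm (a := j)]

lemma isPolynomialFamily_tensorT₁_centralShift (i j : ℕ) :
    IsPolynomialFamily fun z : 𝕜 => tensorT₁ (centralShift z E) F i j := by
  convert IsPolynomialFamily.affine (tensorT₁ E F i j)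
    (if i = j then (1 : End 𝕜 (U ⊗[𝕜] V)) else 0) using 2 with z
  refine TensorProduct.ext' fun u v => ?_
  by_cases h : i = j <;>
    simp [centralShift, h, TensorProduct.add_tmul, TensorProduct.smul_tmul', add_right_comm]

lemma isPolynomialFamily_tensorT₂_centralShift {i : ℕ} (hi : i < n) (j : ℕ) :
    IsPolynomialFamily fun z : 𝕜 => tensorT₂ n (centralShift z E) F i j := by
  convert IsPolynomialFamily.affine (tensorT₂ n E F i j) ((F i j).lTensor U) using 2 with z
  refine TensorProduct.ext' fun u v => ?_
  have shift : ∑ a ∈ range n, (if i = a then z • (1 : End 𝕜 U) else 0) u ⊗ₜ[𝕜] F a j v =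
      z • (u ⊗ₜ F i j v) := by
    rw [sum_eq_single_of_mem i (mem_range.2 hi) fun a _ ha => by simp [ha.symm]]
    simp [TensorProduct.smul_tmul']
  simp [centralShift, TensorProduct.add_tmul, sum_add_distrib, shift]

lemma IsLinked.nonpos [Infinite 𝕜] [FiniteDimensional 𝕜 U] [FiniteDimensional 𝕜 V]
    {ξ : U} {η y : V} {φ : Dual 𝕜 U} {ψ : Dual 𝕜 V} {d : ℤ} (h : IsLinked n E F ξ η y d)
    (hξ : IsHighestVector n E lam ξ) (hη : IsHighestVector n F mu η)
    (hφ : IsHighestVector n (contragredient E) lam φ)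
    (hψ : IsHighestVector n (contragredient F) mu ψ) (hφξ : φ ξ = 1) (hψη : ψ η = 1)
    (hirr : ∀ N : Submodule 𝕜 (U ⊗[𝕜] V),
      (∀ i < n, ∀ j < n, ∀ v ∈ N, tensorT₁ E F i j v ∈ N) →
      (∀ i < n, ∀ j < n, ∀ v ∈ N, tensorT₂ n E F i j v ∈ N) → N = ⊥ ∨ N = ⊤) : d ≤ 0 := by
  obtain ⟨P, Q, -, hQ, rfl, hlink⟩ := h
  have hone : dualDistribSwap 𝕜 U V (ψ ⊗ₜ φ) (ξ ⊗ₜ η) = 1 := by simp [hφξ, hψη]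
  have highest := fun z => (hξ.centralShift z).tmul hη
  have lowest := fun z => IsHighestVector.isYangianLowest_dualDistribSwap
    (hξ.rel.centralShift z) hη.rel
    ((contragredient_centralShift (E := E) z).symm ▸ hφ.centralShift z) hψ
  simp only [add_comm (mu _), mul_comm (mu _)] at lowest
  have htop : polynomialOrbit n (fun z => tensorT₁ (centralShift z E) F)
      (fun z => tensorT₂ n (centralShift z E) F) (ξ ⊗ₜ η) = ⊤ := by
    refine polynomialOrbit_eq_top isPolynomialFamily_tensorT₁_centralShift
      (fun i hi => isPolynomialFamily_tensorT₂_centralShift hi) (fun h => ?_) ?_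
    · simp only [h, map_zero, zero_ne_one] at hone
    · simpa only [centralShift_zero] using hirr
  have := rootMultiplicity_le_of_polynomialOrbit_eq_top highest lowest hone htop hQ hlink
  omega

end CentralDeformation

section Weights

variable {n : ℕ} {lam mu : Fin n → ℂ} {β : ℂ} {L M : ℕ → ℤ} {i j : Fin n}

lemma YangianIrred2.not_isInterlaced {A : GLRep n lam} {B : GLRep n mu} (hirr : YangianIrred2 A B)
    (hL : StrictAnti L) (hM : StrictAnti M) (hlam : ∀ c : Fin n, lshiftC n lam c = β + L c)
    (hmu : ∀ c : Fin n, lshiftC n mu c = β + M c) (hij : i < j) : ¬ IsInterlaced L M i j := by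
  intro h
  have hlam' (c : Fin n) : lam c = β + L c + (c : ℕ) := sub_eq_iff_eq_add.1 (hlam c)
  have hmu' (c : Fin n) : mu c = β + M c + (c : ℕ) := sub_eq_iff_eq_add.1 (hmu c)
  have hξ := A.isHighestVector_op (w := fun c => β + L c + c) hlam'
  have hη := B.isHighestVector_op (w := fun c => β + M c + c) hmu'
  obtain ⟨φ, hφξ, hφ⟩ := A.exists_lowest (w := fun c => β + L c + c) hlam'
  obtain ⟨ψ, hψη, hψ⟩ := B.exists_lowest (w := fun c => β + M c + c) hmu'
  obtain ⟨y, hy⟩ := h.exists_isLinked_one hij j.isLt hL hM hξ hη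
  refine absurd (hy.nonpos hξ hη hφ hψ hφξ hψη fun N h₁ h₂ => hirr N ?_ ?_) (by decide)
  · exact fun i j v hv => GLRep.tensorT₁_op i j ▸ h₁ i i.isLt j j.isLt v hv
  · exact fun i j v hv => GLRep.tensorT₂_op i j ▸ h₂ i i.isLt j j.isLt v hv

lemma IsGLHighestWeight.exists_strictAnti (h : IsGLHighestWeight n lam) :
    ∃ (β : ℂ) (L : ℕ → ℤ), StrictAnti L ∧ ∀ c : Fin n, lshiftC n lam c = β + L c := by
  obtain rfl | m := n
  · exact ⟨0, fun c => -c, fun a b hab => by simpa using hab, fun c => c.elim0⟩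
  choose! N hN using fun (c : Fin (m + 1)) hc => h c hc
  let L : ℕ → ℤ := fun c => -∑ b ∈ range c, ((N (Fin.ofNat (m + 1) b) : ℤ) + 1)
  refine ⟨lshiftC _ lam 0, L, strictAnti_nat_of_succ_lt fun c => ?_, ?_⟩
  · simp only [L, sum_range_succ]
    omega
  · rintro ⟨c, hc⟩
    induction c with
    | zero => simp [L]
    | succ c ih =>
      have hstep := hN ⟨c, by omega⟩ hc
      have hc' : Fin.ofNat (m + 1) c = ⟨c, by omega⟩ := Fin.ext (Nat.mod_eq_of_lt (by omega))
      have ih := ih (by omega)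
      simp only [L, lshiftC, sum_range_succ, hc'] at ih ⊢
      push_cast at ih ⊢
      linear_combination ih - hstep

lemma IsGLHighestWeight.exists_strictAnti₂ (hlam : IsGLHighestWeight n lam)
    (hmu : IsGLHighestWeight n mu) {a b : Fin n} {k : ℤ}
    (hk : lshiftC n mu a = lshiftC n lam b + k) :
    ∃ (β : ℂ) (L M : ℕ → ℤ), StrictAnti L ∧ StrictAnti M ∧
      (∀ c : Fin n, lshiftC n lam c = β + L c) ∧ ∀ c : Fin n, lshiftC n mu c = β + M c := by
  obtain ⟨β, L, hL, hlamL⟩ := hlam.exists_strictAnti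
  obtain ⟨γ, M, hM, hmuM⟩ := hmu.exists_strictAnti
  refine ⟨β, L, fun c => L b + k - M a + M c, hL, hM.const_add _, hlamL, fun c => ?_⟩
  rw [hmuM, hlamL] at hk
  rw [hmuM]
  push_cast
  linear_combination hk

lemma exists_eq_add_intCast_of_not_sepCond (h : ¬ SepCond n lam mu i j) :
    ∃ (a : Fin n) (k : ℤ), lshiftC n mu a = lshiftC n lam j + k := by
  obtain h | h := not_and_or.1 (not_or.1 h).1 <;>
  obtain ⟨⟨t, ht⟩, -⟩ := not_not.1 h <;> exact ⟨_, t, ht⟩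

lemma lt_and_lt_of_mem_bracketC (hij : i < j) (hlam : ∀ c : Fin n, lshiftC n lam c = β + L c)
    {x : ℤ} (h : β + x ∈ bracketC n (lshiftC n lam) i j) :
    L j < x ∧ x < L i ∧ ∀ s : ℕ, i ≤ s → s ≤ j → L s ≠ x := by
  obtain ⟨⟨t, ht⟩, ⟨u, hu⟩, hne⟩ := h
  rw [hlam, add_assoc] at ht hu
  have ht' : x = L j + t := by exact_mod_cast add_left_cancel ht
  have hu' : L i = x + u := by exact_mod_cast add_left_cancel hu
  have hne' : ∀ s : ℕ, i ≤ s → s ≤ j → L s ≠ x := fun s his hsj hs =>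
    hne ⟨s, hsj.trans_lt j.isLt⟩ his hsj (by rw [hlam, hs])
  have := hne' i le_rfl hij.le
  have := hne' j hij.le le_rfl
  exact ⟨by omega, by omega, hne'⟩

lemma isInterlaced_or_isInterlaced_of_not_sepCond (hij : i < j)
    (hlam : ∀ c : Fin n, lshiftC n lam c = β + L c) (hmu : ∀ c : Fin n, lshiftC n mu c = β + M c)
    (h : ¬ SepCond n lam mu i j) : IsInterlaced L M i j ∨ IsInterlaced M L i j := by
  simp only [SepCond, not_or, not_and_or, not_not, hmu _, hlam _] at h
  obtain ⟨hM | hM, hL | hL⟩ := h <;>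
  obtain ⟨hM₁, hM₂, hM₃⟩ := lt_and_lt_of_mem_bracketC hij hlam hM <;>
  obtain ⟨hL₁, hL₂, hL₃⟩ := lt_and_lt_of_mem_bracketC hij hmu hL
  · exact absurd hL₁ hM₁.asymm
  · exact .inr ⟨hM₁, hL₁, hL₂, hL₃, hM₃⟩
  · exact .inl ⟨hL₁, hM₁, hM₂, hM₃, hL₃⟩
  · exact absurd hL₂ hM₂.asymm

end Weights

/-- If the `Y(gl_n)`-module `L(λ) ⊗ L(μ)` is irreducible, then
for each pair of indices `i < j` the separation condition holds. -/
theorem sepCond_of_tensorEval_irreducible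
    (n : ℕ) (lam mu : Fin n → ℂ)
    (hlam : IsGLHighestWeight n lam) (hmu : IsGLHighestWeight n mu)
    (A : GLRep n lam) (B : GLRep n mu)
    (hirr : YangianIrred2 A B) :
    ∀ i j : Fin n, i < j → SepCond n lam mu i j := by
  intro i j hij
  by_contra hsep
  obtain ⟨a, k, hk⟩ := exists_eq_add_intCast_of_not_sepCond hsep
  obtain ⟨β, L, M, hL, hM, hlamL, hmuM⟩ := hlam.exists_strictAnti₂ hmu hk
  obtain h | h := isInterlaced_or_isInterlaced_of_not_sepCond hij hlamL hmuM hsep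
  · exact hirr.not_isInterlaced hL hM hlamL hmuM hij h
  · exact hirr.dual.not_isInterlaced hM hL hmuM hlamL hij h
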